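/- arXiv:2209.03595 — 2 statements merged into one kernel-verified Lean document; each statement's English description precedes it below -/
import Mathlib

section
/- Let n ≥ 1 and let f be an integrable function on ℝ^n satisfying ∑_{k ∈ ℤ^n} ∫_{Q_k} |f_k(x)| (1 + ln₊(|f_k(x)|/μ_k)) dx < ∞ (terms with μ_k = 0 interpreted as 0). Set h_k = f_k − (∫ f_k dx)·χ_{Q_k} and h = ∑_{k ∈ ℤ^n} h_k. Then for every smooth φ supported in the closed unit ball with ∫φ = 1 one has ∑_{k ∈ ℤ^n} ‖𝓜_φ h_k‖_{L^1} < ∞, and in particular h belongs to H^1(ℝ^n). -/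
open MeasureTheory Real Set Metric ENNReal

noncomputable section

/-- `ℝ^n` with the Euclidean norm. -/
abbrev En (n : ℕ) := EuclideanSpace ℝ (Fin n)

/-- `ln₊ t = max (ln t) 0`. -/
def lnp (t : ℝ) : ℝ := max (Real.log t) 0

/-- The unit cube `Q = (-1/2, 1/2)^n`. -/
def unitQ (n : ℕ) : Set (En n) := {x | ∀ i, -(1/2 : ℝ) < x i ∧ x i < 1/2}

/-- The dilate `φ_t(y) = t^{-n} φ(y/t)` convolved with `f` at `x`:
`(φ_t ∗ f)(x) = ∫ t^{-n} φ((x-y)/t) f(y) dy`. -/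
def phiConv (n : ℕ) (φ f : En n → ℝ) (t : ℝ) (x : En n) : ℝ :=
  ∫ y, (t ^ n)⁻¹ * φ (t⁻¹ • (x - y)) * f y

/-- The maximal function `𝓜_φ f(x) = sup_{t>0} |(φ_t ∗ f)(x)|`. -/
def Mphi (n : ℕ) (φ f : En n → ℝ) (x : En n) : ℝ :=
  ⨆ t : {t : ℝ // 0 < t}, |phiConv n φ f t.1 x|

/-- A smooth function supported in the closed unit ball with integral `1`. -/
def IsTestFun (n : ℕ) (φ : En n → ℝ) : Prop :=
  ContDiff ℝ (⊤ : ℕ∞) φ ∧ (∀ x, x ∉ Metric.closedBall (0 : En n) 1 → φ x = 0) ∧ (∫ x, φ x) = 1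

/-- Membership in the Hardy space `H^1(ℝ^n)`: the maximal function `𝓜_φ f` is
integrable for every admissible `φ`. -/
def MemH1 (n : ℕ) (f : En n → ℝ) : Prop :=
  ∀ φ : En n → ℝ, IsTestFun n φ → Integrable (Mphi n φ f)

/-- The cube `Q_k = k + Q` for `k ∈ ℤ^n`. -/
def Qk (n : ℕ) (k : Fin n → ℤ) : Set (En n) :=
  {x | ∀ i, (k i : ℝ) - 1/2 < x i ∧ x i < (k i : ℝ) + 1/2}

/-- The lattice point `k ∈ ℤ^n` viewed as a point of `ℝ^n`. -/
def zv (n : ℕ) (k : Fin n → ℤ) : En n :=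
  (EuclideanSpace.equiv (Fin n) ℝ).symm (fun i => (k i : ℝ))

/-- `μ_k = ‖f_k‖_{L^1} = ∫_{Q_k} |f|`. -/
def muk (n : ℕ) (f : En n → ℝ) (k : Fin n → ℤ) : ℝ := ∫ x in Qk n k, |f x|

/-- The local Hardy–Littlewood maximal function
`M^loc f(x) = sup_{0<r<1} r^{-n} ∫_{|y-x|<r} |f(y)| dy`. -/
def Mloc (n : ℕ) (f : En n → ℝ) (x : En n) : ℝ :=
  ⨆ r : Set.Ioo (0 : ℝ) 1, ((r : ℝ) ^ n)⁻¹ * ∫ y in Metric.ball x (r : ℝ), |f y|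

/-!
Near the cube `Q_k`, `𝓜_φ h_k` is dominated by the Hardy–Littlewood maximal function of `|h_k|`.
Since `|h_k| ≤ |f_k| + μ_k`, the weak type `(1, 1)` inequality, applied at the dyadic heights
`2 ^ j μ_k` to the part of `f_k` above each height, bounds its integral over a ball around `Q_k` by
a multiple of `μ_k + ∫ |f_k| (1 + ln₊ (|f_k| / μ_k))`. Away from the cube, `∫ h_k = 0` and the
Lipschitz bound for `φ` give the integrable decay `(1 + |x - k|) ^ (-(n + 1))` with a factor
`‖h_k‖₁ ≤ 2 μ_k`. The constants depend on `n` and `φ` only, so both estimates can be summed over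
`k`, and `𝓜_φ` is countably subadditive.
-/

section DyadicSums

variable {α : Type*} [MeasurableSpace α]

lemma le_add_tsum_two_pow_mul_indicator (a : ℝ≥0∞) {b : ℝ≥0∞} (hb : b ≠ 0) :
    a ≤ b + ∑' j : ℕ, 2 ^ j * b * (Ioi (2 ^ j * b)).indicator 1 a := by
  have sum_range (J : ℕ) : b + ∑ j ∈ Finset.range J, 2 ^ j * b = 2 ^ J * b := by
    induction J with
    | zero => simp
    | succ J ih => rw [Finset.sum_range_succ, ← add_assoc, ih]; ring
  have partial_le (J : ℕ) (hJ : ∀ j < J, 2 ^ j * b < a) :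
      2 ^ J * b ≤ b + ∑' j : ℕ, 2 ^ j * b * (Ioi (2 ^ j * b)).indicator 1 a := by
    rw [← sum_range J]
    gcongr
    refine le_trans (Finset.sum_le_sum fun j hj => ?_) (ENNReal.sum_le_tsum (Finset.range J))
    rw [indicator_of_mem (mem_Ioi.2 (hJ j (Finset.mem_range.1 hj))), Pi.one_apply, mul_one]
  by_cases! h : ∃ J : ℕ, a ≤ 2 ^ J * b
  · classical
    exact (Nat.find_spec h).trans (partial_le _ fun j hj => not_le.1 (Nat.find_min h hj))
  · have tendsto_top : Filter.Tendsto (fun J : ℕ => (2 : ℝ≥0∞) ^ J * b) Filter.atTop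
        (nhds (⊤ * b)) :=
      ENNReal.Tendsto.mul_const (ENNReal.tendsto_pow_atTop_nhds_top_iff.2 (by norm_num))
        (Or.inl ENNReal.top_ne_zero)
    rw [ENNReal.top_mul hb] at tendsto_top
    exact le_top.trans (le_of_tendsto' tendsto_top fun J => partial_le J fun j _ => h j)

lemma lintegral_le_add_tsum_two_pow_mul_meas_lt (μ : Measure α) (F : α → ℝ≥0∞) {b : ℝ≥0∞}
    (hb : b ≠ 0) (s : Set α) :
    ∫⁻ x in s, F x ∂μ ≤ b * μ s + ∑' j : ℕ, 2 ^ j * b * μ {x | 2 ^ j * b < F x} := by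
  -- `F` need not be measurable, so its superlevel sets are replaced by measurable hulls.
  let E (j : ℕ) : Set α := toMeasurable μ {x | 2 ^ j * b < F x}
  have measurableSet_E (j : ℕ) : MeasurableSet (E j) := measurableSet_toMeasurable _ _
  have le_sum (x : α) : F x ≤ b + ∑' j : ℕ, (E j).indicator (fun _ => 2 ^ j * b) x := by
    refine (le_add_tsum_two_pow_mul_indicator (F x) hb).trans ?_
    gcongr with j
    by_cases hx : 2 ^ j * b < F x
    · rw [indicator_of_mem (subset_toMeasurable μ _ hx)]
      exact mul_le_of_le_one_right' (indicator_apply_le' (fun _ => le_rfl) fun _ => zero_le_one)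
    · rw [indicator_of_notMem (by simpa using hx), mul_zero]
      exact zero_le
  calc ∫⁻ x in s, F x ∂μ
      ≤ ∫⁻ x in s, (b + ∑' j : ℕ, (E j).indicator (fun _ => 2 ^ j * b) x) ∂μ :=
        lintegral_mono le_sum
    _ = b * μ s + ∑' j : ℕ, 2 ^ j * b * μ.restrict s (E j) := by
        rw [lintegral_add_left measurable_const, setLIntegral_const, lintegral_tsum fun j =>
          (measurable_const.indicator (measurableSet_E j)).aemeasurable]
        simp only [fun j => lintegral_indicator_const (μ := μ.restrict s) (measurableSet_E j)]
    _ ≤ b * μ s + ∑' j : ℕ, 2 ^ j * b * μ {x | 2 ^ j * b < F x} := by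
        gcongr _ + ∑' j, _ * ?_ with j
        exact (Measure.restrict_apply_le s (E j)).trans_eq (measure_toMeasurable (μ := μ) _)

lemma lnp_nonneg (t : ℝ) : 0 ≤ lnp t := le_max_right _ _

lemma natCeil_logb_two_le (t : ℝ) : (⌈Real.logb 2 t⌉₊ : ℝ) ≤ 2 * (1 + lnp t) := by
  have logb_le : Real.logb 2 t ≤ 2 * lnp t := by
    rw [Real.logb, div_le_iff₀ (Real.log_pos (by norm_num))]
    have log_le : Real.log t ≤ lnp t := le_max_left _ _
    nlinarith [Real.log_two_gt_d9, lnp_nonneg t]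
  rcases le_total (Real.logb 2 t) 0 with hneg | hpos
  · rw [Nat.ceil_eq_zero.2 hneg, Nat.cast_zero]
    linarith [lnp_nonneg t]
  · linarith [Nat.ceil_lt_add_one hpos]

/-- The Orlicz function `|a| (1 + ln₊ (|a| / m))` of the space `L log L`, normalized at height `m`,
with values in `[0, ∞]`. -/
def llogL (m a : ℝ) : ℝ≥0∞ := ENNReal.ofReal (|a| * (1 + lnp (|a| / m)))

lemma llogL_zero_right (m : ℝ) : llogL m 0 = 0 := by simp [llogL]

lemma enorm_le_llogL (m a : ℝ) : ‖a‖ₑ ≤ llogL m a := by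
  rw [Real.enorm_eq_ofReal_abs]
  exact ENNReal.ofReal_le_ofReal <|
    le_mul_of_one_le_right (abs_nonneg a) (le_add_of_nonneg_right (lnp_nonneg _))

-- Only the first `⌈log₂ (|a| / m)⌉` truncated differences are nonzero, each at most `|a|`.
lemma tsum_enorm_sub_two_pow_mul_le (a : ℝ) {m : ℝ} (hm : 0 < m) :
    ∑' j : ℕ, (‖a‖ₑ - 2 ^ j * ENNReal.ofReal m) ≤ 2 * llogL m a := by
  rcases eq_or_ne a 0 with rfl | ha
  · simp
  set N := ⌈Real.logb 2 (|a| / m)⌉₊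
  have vanish (j : ℕ) (hj : j ∉ Finset.range N) : ‖a‖ₑ - 2 ^ j * ENNReal.ofReal m = 0 := by
    have hNj : Real.logb 2 (|a| / m) ≤ j := Nat.ceil_le.1 (not_lt.1 (hj ∘ Finset.mem_range.2))
    rw [Real.logb_le_iff_le_rpow one_lt_two (by positivity), Real.rpow_natCast,
      div_le_iff₀ hm] at hNj
    rw [tsub_eq_zero_iff_le, Real.enorm_eq_ofReal_abs]
    simpa [ENNReal.ofReal_mul, ENNReal.ofReal_pow] using ENNReal.ofReal_le_ofReal hNj
  calc ∑' j : ℕ, (‖a‖ₑ - 2 ^ j * ENNReal.ofReal m)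
      = ∑ j ∈ Finset.range N, (‖a‖ₑ - 2 ^ j * ENNReal.ofReal m) := tsum_eq_sum vanish
    _ ≤ ∑ _j ∈ Finset.range N, ‖a‖ₑ := Finset.sum_le_sum fun _ _ => tsub_le_self
    _ = ENNReal.ofReal (N * |a|) := by
        rw [ENNReal.ofReal_mul (Nat.cast_nonneg _), ← Real.enorm_eq_ofReal_abs]; simp
    _ ≤ ENNReal.ofReal (2 * (|a| * (1 + lnp (|a| / m)))) := by
        apply ENNReal.ofReal_le_ofReal
        linarith [mul_le_mul_of_nonneg_right (natCeil_logb_two_le (|a| / m)) (abs_nonneg a)]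
    _ = 2 * llogL m a := by
        rw [ENNReal.ofReal_mul zero_le_two, ENNReal.ofReal_ofNat, llogL]

end DyadicSums

section HardyLittlewood

variable {α : Type*} [PseudoMetricSpace α] [MeasurableSpace α] {μ : Measure α}

/-- The centred Hardy–Littlewood maximal function `sup_{r > 0} ⨍_{B(x, r)} v`, over closed balls,
of a function `v` with values in `[0, ∞]`. -/
def hlMaximal (μ : Measure α) (v : α → ℝ≥0∞) (x : α) : ℝ≥0∞ :=
  ⨆ r : Ioi (0 : ℝ), ⨍⁻ y in closedBall x r, v y ∂μ

lemma setLAverage_le_hlMaximal (μ : Measure α) (v : α → ℝ≥0∞) (x : α) {r : ℝ} (hr : 0 < r) :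
    ⨍⁻ y in closedBall x r, v y ∂μ ≤ hlMaximal μ v x :=
  le_iSup (fun r : Ioi (0 : ℝ) => ⨍⁻ y in closedBall x r, v y ∂μ) ⟨r, hr⟩

lemma hlMaximal_le_add_const {u v : α → ℝ≥0∞} {c : ℝ≥0∞} (huv : ∀ y, u y ≤ v y + c) (x : α) :
    hlMaximal μ u x ≤ hlMaximal μ v x + c := by
  refine iSup_le fun ⟨r, hr⟩ => ?_
  calc ⨍⁻ y in closedBall x r, u y ∂μ
      ≤ ⨍⁻ y in closedBall x r, (v y + c) ∂μ := lintegral_mono huv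
    _ = ⨍⁻ y in closedBall x r, v y ∂μ + ⨍⁻ _ in closedBall x r, c ∂μ :=
        lintegral_add_right _ measurable_const
    _ ≤ hlMaximal μ v x + c := by
        refine add_le_add (setLAverage_le_hlMaximal μ v x hr) ?_
        rw [setLAverage_eq, setLIntegral_const]
        exact ENNReal.div_le_of_le_mul le_rfl

variable [OpensMeasurableSpace α] [TopologicalSpace.SeparableSpace α] {C : ℝ≥0∞}

lemma mul_meas_le_of_mul_meas_closedBall_le
    (hC : ∀ x r, μ (closedBall x (5 * r)) ≤ C * μ (closedBall x r))
    {v : α → ℝ≥0∞} {l : ℝ≥0∞} {E : Set α} {r : α → ℝ} {R : ℝ} (hr_pos : ∀ x ∈ E, 0 < r x)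
    (hr_le : ∀ x ∈ E, r x ≤ R)
    (hv : ∀ x ∈ E, l * μ (closedBall x (r x)) ≤ ∫⁻ y in closedBall x (r x), v y ∂μ) :
    l * μ E ≤ C * ∫⁻ y, v y ∂μ := by
  obtain ⟨u, huE, disjoint_u, cover_u⟩ :=
    Vitali.exists_disjoint_subfamily_covering_enlargement_closedBall E id r R hr_le 5 (by norm_num)
  have : Countable u := Set.Countable.to_subtype <| disjoint_u.countable_of_nonempty_interior
    fun x hx => ⟨x, ball_subset_interior_closedBall (mem_ball_self (hr_pos x (huE hx)))⟩
  have E_subset : E ⊆ ⋃ b : u, closedBall (b : α) (5 * r b) := fun x hx => by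
    obtain ⟨b, hb, hxb⟩ := cover_u x hx
    exact mem_iUnion.2 ⟨⟨b, hb⟩, hxb (mem_closedBall_self (hr_pos x hx).le)⟩
  calc l * μ E ≤ l * ∑' b : u, C * μ (closedBall (b : α) (r b)) := by
        gcongr
        refine (measure_mono E_subset).trans ((measure_iUnion_le _).trans ?_)
        exact ENNReal.tsum_le_tsum fun b => hC b (r b)
    _ = C * ∑' b : u, l * μ (closedBall (b : α) (r b)) := by
        simp only [ENNReal.tsum_mul_left]; ring
    _ ≤ C * ∑' b : u, ∫⁻ y in closedBall (b : α) (r b), v y ∂μ := by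
        gcongr with b
        exact hv b (huE b.2)
    _ = C * ∫⁻ y in ⋃ b : u, closedBall (b : α) (r b), v y ∂μ := by
        rw [lintegral_iUnion (s := fun b : u => closedBall (b : α) (r b))
          (fun _ => measurableSet_closedBall) fun a b hab =>
            disjoint_u a.2 b.2 (Subtype.coe_ne_coe.2 hab)]
    _ ≤ C * ∫⁻ y, v y ∂μ := by gcongr; exact Measure.restrict_le_self

lemma mul_meas_lt_hlMaximal_le (hC : ∀ x r, μ (closedBall x (5 * r)) ≤ C * μ (closedBall x r))
    (v : α → ℝ≥0∞) (l : ℝ≥0∞) :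
    l * μ {x | l < hlMaximal μ v x} ≤ C * ∫⁻ y, v y ∂μ := by
  -- The covering lemma needs bounded radii, so exhaust the superlevel set by radii at most `N`.
  let E (N : ℕ) : Set α :=
    {x | ∃ r > 0, r ≤ (N : ℝ) ∧ l * μ (closedBall x r) ≤ ∫⁻ y in closedBall x r, v y ∂μ}
  have monotone_E : Monotone E := fun M N hMN x ⟨r, hr, hrM, h⟩ =>
    ⟨r, hr, hrM.trans (by exact_mod_cast hMN), h⟩
  have subset_iUnion : {x | l < hlMaximal μ v x} ⊆ ⋃ N, E N := fun x hx => by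
    obtain ⟨⟨r, hr⟩, hlr⟩ := lt_iSup_iff.1 (show l < hlMaximal μ v x from hx)
    obtain ⟨N, hN⟩ := exists_nat_ge r
    rw [setLAverage_eq] at hlr
    exact mem_iUnion.2 ⟨N, r, hr, hN, ENNReal.mul_le_of_le_div hlr.le⟩
  have bound_E (N : ℕ) : l * μ (E N) ≤ C * ∫⁻ y, v y ∂μ := by
    have (x : α) (hx : x ∈ E N) : ∃ r > 0, r ≤ (N : ℝ) ∧
      l * μ (closedBall x r) ≤ ∫⁻ y in closedBall x r, v y ∂μ := hx
    choose! r hr_pos hr_le hr using this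
    exact mul_meas_le_of_mul_meas_closedBall_le hC hr_pos hr_le hr
  calc l * μ {x | l < hlMaximal μ v x} ≤ l * ⨆ N, μ (E N) := by
        rw [← monotone_E.measure_iUnion]
        gcongr
    _ = ⨆ N, l * μ (E N) := ENNReal.mul_iSup ..
    _ ≤ C * ∫⁻ y, v y ∂μ := iSup_le bound_E

-- The part of `u` below height `l` contributes at most `l` to the maximal function.
lemma mul_meas_two_mul_lt_hlMaximal_le
    (hC : ∀ x r, μ (closedBall x (5 * r)) ≤ C * μ (closedBall x r)) (u : α → ℝ≥0∞) (l : ℝ≥0∞) :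
    l * μ {x | 2 * l < hlMaximal μ u x} ≤ C * ∫⁻ y, (u y - l) ∂μ := by
  refine le_trans ?_ (mul_meas_lt_hlMaximal_le hC (fun y => u y - l) l)
  refine mul_le_mul_right (measure_mono fun x hx => ?_) l
  refine lt_of_add_lt_add_right (a := l) ?_
  rw [← two_mul]
  exact lt_of_lt_of_le hx (hlMaximal_le_add_const (fun y => le_tsub_add) x)

lemma setLIntegral_hlMaximal_le
    (hC : ∀ x r, μ (closedBall x (5 * r)) ≤ C * μ (closedBall x r)) {g : α → ℝ}
    (hg : AEMeasurable g μ) {m : ℝ} (hm : 0 < m) (s : Set α) :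
    ∫⁻ x in s, hlMaximal μ (fun y => ‖g y‖ₑ) x ∂μ ≤
      2 * ENNReal.ofReal m * μ s + 4 * C * ∫⁻ x, llogL m (g x) ∂μ := by
  set M := ENNReal.ofReal m
  set u : α → ℝ≥0∞ := fun y => ‖g y‖ₑ
  have hM : 2 * M ≠ 0 := mul_ne_zero two_ne_zero (ENNReal.ofReal_pos.2 hm).ne'
  calc ∫⁻ x in s, hlMaximal μ u x ∂μ
      ≤ 2 * M * μ s + ∑' j : ℕ, 2 ^ j * (2 * M) * μ {x | 2 ^ j * (2 * M) < hlMaximal μ u x} :=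
        lintegral_le_add_tsum_two_pow_mul_meas_lt μ _ hM s
    _ = 2 * M * μ s + ∑' j : ℕ, 2 * (2 ^ j * M * μ {x | 2 * (2 ^ j * M) < hlMaximal μ u x}) := by
        simp only [mul_left_comm _ (2 : ℝ≥0∞), mul_assoc]
    _ ≤ 2 * M * μ s + ∑' j : ℕ, 2 * (C * ∫⁻ y, (u y - 2 ^ j * M) ∂μ) := by
        gcongr _ + ∑' j, 2 * ?_ with j
        exact mul_meas_two_mul_lt_hlMaximal_le hC u (2 ^ j * M)
    _ = 2 * M * μ s + 2 * (C * ∫⁻ y, ∑' j : ℕ, (u y - 2 ^ j * M) ∂μ) := by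
        rw [ENNReal.tsum_mul_left, ENNReal.tsum_mul_left,
          lintegral_tsum fun j =>
            (hg.enorm.sub_const (2 ^ j * M) : AEMeasurable (fun y => u y - 2 ^ j * M) μ)]
    _ ≤ 2 * M * μ s + 2 * (C * ∫⁻ y, 2 * llogL m (g y) ∂μ) := by
        gcongr with y
        exact tsum_enorm_sub_two_pow_mul_le (g y) hm
    _ = 2 * M * μ s + 4 * C * ∫⁻ x, llogL m (g x) ∂μ := by
        rw [lintegral_const_mul' _ _ ENNReal.ofNat_ne_top]; ring

end HardyLittlewood

lemma addHaar_closedBall_five_mul_le {E : Type*} [NormedAddCommGroup E] [NormedSpace ℝ E]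
    [FiniteDimensional ℝ E] [MeasurableSpace E] [BorelSpace E] (μ : Measure E)
    [μ.IsAddHaarMeasure] (x : E) (r : ℝ) :
    μ (closedBall x (5 * r)) ≤ 5 ^ Module.finrank ℝ E * μ (closedBall x r) := by
  rw [Measure.addHaar_closedBall_mul_of_pos μ x (by norm_num),
    Measure.addHaar_closedBall_center μ x, ENNReal.ofReal_pow (by norm_num), ENNReal.ofReal_ofNat]

lemma integrable_tsum_of_tsum_lintegral_enorm {ι α : Type*} [Countable ι] [MeasurableSpace α]
    {μ : Measure α} {F : ι → α → ℝ} (hF : ∀ i, Integrable (F i) μ)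
    (hsum : ∑' i, ∫⁻ y, ‖F i y‖ₑ ∂μ ≠ ⊤) :
    Integrable (fun y => ∑' i, F i y) μ := by
  refine ⟨(AEMeasurable.tsum fun i => (hF i).aemeasurable).aestronglyMeasurable, ?_⟩
  calc ∫⁻ y, ‖∑' i, F i y‖ₑ ∂μ ≤ ∫⁻ y, ∑' i, ‖F i y‖ₑ ∂μ :=
        lintegral_mono fun y => enorm_tsum_le_tsum_enorm
    _ = ∑' i, ∫⁻ y, ‖F i y‖ₑ ∂μ := lintegral_tsum fun i => (hF i).aestronglyMeasurable.enorm
    _ < ⊤ := hsum.lt_top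

section MaximalFunction

variable {n : ℕ} {φ : En n → ℝ}

/-- The maximal function `𝓜_φ f` with values in `[0, ∞]`. Its real part is `Mphi`, which takes the
junk value `0` where the supremum is infinite. -/
def eMphi (n : ℕ) (φ f : En n → ℝ) (x : En n) : ℝ≥0∞ :=
  ⨆ t : {t : ℝ // 0 < t}, ‖phiConv n φ f t.1 x‖ₑ

lemma Mphi_eq_toReal_eMphi (φ f : En n → ℝ) (x : En n) : Mphi n φ f x = (eMphi n φ f x).toReal := by
  simp only [Mphi, eMphi, ENNReal.toReal_iSup fun _ => enorm_ne_top, toReal_enorm, Real.norm_eq_abs]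

lemma eMphi_eq_zero_of_ae_eq_zero {f : En n → ℝ} (hf : f =ᵐ[volume] 0) (x : En n) :
    eMphi n φ f x = 0 := by
  have phiConv_eq_zero (t : ℝ) : phiConv n φ f t x = 0 :=
    integral_eq_zero_of_ae (hf.mono fun y hy => by simp [hy])
  simp [eMphi, phiConv_eq_zero]

lemma kernel_eq_zero_of_notMem_closedBall (hsupp : Function.support φ ⊆ closedBall 0 1) {t : ℝ}
    (ht : 0 < t) {x y : En n} (hy : y ∉ closedBall x t) : φ (t⁻¹ • (x - y)) = 0 := by
  refine Function.notMem_support.1 fun hmem => hy ?_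
  have := mem_closedBall_zero_iff.1 (hsupp hmem)
  rwa [norm_smul, norm_inv, Real.norm_of_nonneg ht.le, inv_mul_le_one₀ ht, ← dist_eq_norm,
    dist_comm] at this

section Bounded

variable {K : NNReal} {f : En n → ℝ}

lemma enorm_phiConv_le (hK : ∀ x, ‖φ x‖₊ ≤ K) (hsupp : Function.support φ ⊆ closedBall 0 1)
    {t : ℝ} (ht : 0 < t) (f : En n → ℝ) (x : En n) :
    ‖phiConv n φ f t x‖ₑ ≤
      K * volume (ball (0 : En n) 1) * ⨍⁻ y in closedBall x t, ‖f y‖ₑ ∂volume := by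
  have enorm_integrand_le (y : En n) : ‖(t ^ n)⁻¹ * φ (t⁻¹ • (x - y)) * f y‖ₑ ≤
      (closedBall x t).indicator (fun y => ENNReal.ofReal (t ^ n)⁻¹ * K * ‖f y‖ₑ) y := by
    by_cases hy : y ∈ closedBall x t
    · rw [indicator_of_mem hy, enorm_mul, enorm_mul, Real.enorm_of_nonneg (by positivity)]
      gcongr
      exact enorm_le_coe.2 (hK _)
    · simp [kernel_eq_zero_of_notMem_closedBall hsupp ht hy]
  have volume_closedBall : volume (closedBall x t) =
      ENNReal.ofReal (t ^ n) * volume (ball (0 : En n) 1) := by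
    rw [Measure.addHaar_closedBall _ _ ht.le, finrank_euclideanSpace_fin]
  have volume_ball_ne_zero : volume (ball (0 : En n) 1) ≠ 0 :=
    (measure_ball_pos volume _ one_pos).ne'
  have volume_ball_ne_top : volume (ball (0 : En n) 1) ≠ ⊤ := measure_ball_lt_top.ne
  calc ‖phiConv n φ f t x‖ₑ
      ≤ ∫⁻ y, (closedBall x t).indicator (fun y => ENNReal.ofReal (t ^ n)⁻¹ * K * ‖f y‖ₑ) y :=
        (enorm_integral_le_lintegral_enorm _).trans (lintegral_mono enorm_integrand_le)
    _ = (ENNReal.ofReal (t ^ n))⁻¹ * K * ∫⁻ y in closedBall x t, ‖f y‖ₑ := by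
        rw [lintegral_indicator measurableSet_closedBall,
          lintegral_const_mul' _ _ (by finiteness), ENNReal.ofReal_inv_of_pos (by positivity)]
    _ = K * volume (ball (0 : En n) 1) * ⨍⁻ y in closedBall x t, ‖f y‖ₑ ∂volume := by
        rw [setLAverage_eq, volume_closedBall, ENNReal.div_eq_inv_mul,
          ENNReal.mul_inv (Or.inr volume_ball_ne_top) (Or.inr volume_ball_ne_zero)]
        rw [← mul_one ((ENNReal.ofReal (t ^ n))⁻¹ * K),
          ← ENNReal.mul_inv_cancel volume_ball_ne_zero volume_ball_ne_top]
        ring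

lemma eMphi_le_hlMaximal (hK : ∀ x, ‖φ x‖₊ ≤ K) (hsupp : Function.support φ ⊆ closedBall 0 1)
    (f : En n → ℝ) (x : En n) :
    eMphi n φ f x ≤
      K * volume (ball (0 : En n) 1) * hlMaximal volume (fun y => ‖f y‖ₑ) x := by
  refine iSup_le fun ⟨t, ht⟩ => (enorm_phiConv_le hK hsupp ht f x).trans ?_
  gcongr
  exact setLAverage_le_hlMaximal volume _ x ht

lemma continuous_phiConv (hφ : Continuous φ) (hK : ∀ x, ‖φ x‖₊ ≤ K) (hf : Integrable f) (t : ℝ) :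
    Continuous (phiConv n φ f t) := by
  refine continuous_of_dominated (bound := fun y => ‖(t ^ n)⁻¹‖ * K * ‖f y‖) (fun x => ?_)
    (fun x => .of_forall fun y => ?_) (hf.norm.const_mul _) (.of_forall fun y => ?_)
  · exact (Continuous.aestronglyMeasurable (by fun_prop)).mul hf.aestronglyMeasurable
  · rw [norm_mul, norm_mul]
    gcongr
    exact hK _
  · fun_prop

lemma measurable_eMphi (hφ : Continuous φ) (hK : ∀ x, ‖φ x‖₊ ≤ K) (hf : Integrable f) :
    Measurable (eMphi n φ f) :=
  LowerSemicontinuous.measurable <| lowerSemicontinuous_iSup fun t =>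
    (continuous_phiConv hφ hK hf t.1).enorm.lowerSemicontinuous

variable {ι : Type*} [Countable ι] {F : ι → En n → ℝ}

lemma phiConv_tsum (hφ : Continuous φ) (hK : ∀ x, ‖φ x‖₊ ≤ K) (hF : ∀ i, Integrable (F i))
    (hsum : ∑' i, ∫⁻ y, ‖F i y‖ₑ ≠ ⊤) (t : ℝ) (x : En n) :
    phiConv n φ (fun y => ∑' i, F i y) t x = ∑' i, phiConv n φ (F i) t x := by
  have lintegral_le (i : ι) : ∫⁻ y, ‖(t ^ n)⁻¹ * φ (t⁻¹ • (x - y)) * F i y‖ₑ ≤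
      ‖(t ^ n)⁻¹‖ₑ * K * ∫⁻ y, ‖F i y‖ₑ := by
    rw [← lintegral_const_mul' _ _ (by finiteness)]
    refine lintegral_mono fun y => ?_
    rw [enorm_mul, enorm_mul]
    gcongr
    exact enorm_le_coe.2 (hK _)
  simp only [phiConv, ← tsum_mul_left]
  refine integral_tsum (fun i => ?_) (ne_top_of_le_ne_top ?_ (ENNReal.tsum_le_tsum lintegral_le))
  · exact (Continuous.aestronglyMeasurable (by fun_prop)).mul (hF i).aestronglyMeasurable
  · rw [ENNReal.tsum_mul_left]
    finiteness

lemma eMphi_tsum_le (hφ : Continuous φ) (hK : ∀ x, ‖φ x‖₊ ≤ K) (hF : ∀ i, Integrable (F i))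
    (hsum : ∑' i, ∫⁻ y, ‖F i y‖ₑ ≠ ⊤) (x : En n) :
    eMphi n φ (fun y => ∑' i, F i y) x ≤ ∑' i, eMphi n φ (F i) x := by
  refine iSup_le fun t => ?_
  rw [phiConv_tsum hφ hK hF hsum]
  refine enorm_tsum_le_tsum_enorm.trans (ENNReal.tsum_le_tsum fun i => ?_)
  exact le_iSup (fun t : {t : ℝ // 0 < t} => ‖phiConv n φ (F i) t.1 x‖ₑ) t

lemma integrable_Mphi_tsum (hφ : Continuous φ) (hK : ∀ x, ‖φ x‖₊ ≤ K)
    (hF : ∀ i, Integrable (F i)) (hsum : ∑' i, ∫⁻ y, ‖F i y‖ₑ ≠ ⊤)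
    (hmax : ∑' i, ∫⁻ x, eMphi n φ (F i) x ≠ ⊤) :
    Integrable (Mphi n φ fun y => ∑' i, F i y) := by
  have hint := integrable_tsum_of_tsum_lintegral_enorm hF hsum
  simp only [funext (Mphi_eq_toReal_eMphi φ _)]
  refine integrable_toReal_of_lintegral_ne_top (measurable_eMphi hφ hK hint).aemeasurable ?_
  refine ne_top_of_le_ne_top hmax ?_
  rw [← lintegral_tsum fun i => (measurable_eMphi hφ hK (hF i)).aemeasurable]
  exact lintegral_mono (eMphi_tsum_le hφ hK hF hsum)

end Bounded

section Decay

variable {L R : NNReal} {f : En n → ℝ} {z : En n}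

lemma phiConv_eq_zero_of_add_lt_dist (hsupp : Function.support φ ⊆ closedBall 0 1)
    (hf : Function.support f ⊆ closedBall z R) {t : ℝ} (ht : 0 < t) {x : En n}
    (hx : t + R < dist x z) : phiConv n φ f t x = 0 := by
  refine integral_eq_zero_of_ae (.of_forall fun y => ?_)
  by_cases hy : y ∈ closedBall x t
  · have : y ∉ Function.support f := fun hyf => by
      linarith [mem_closedBall'.1 hy, mem_closedBall.1 (hf hyf), dist_triangle x y z]
    simp [Function.notMem_support.1 this]
  · simp [kernel_eq_zero_of_notMem_closedBall hsupp ht hy]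

-- By cancellation, `φ ((x - y) / t)` may be replaced by its increment from the centre `z`.
lemma norm_phiConv_le_of_integral_eq_zero (hL : LipschitzWith L φ) (hint : Integrable f)
    (hzero : ∫ y, f y = 0) (hf : Function.support f ⊆ closedBall z R) {t : ℝ} (ht : 0 < t)
    (x : En n) : ‖phiConv n φ f t x‖ ≤ L * R * t⁻¹ ^ (n + 1) * ∫ y, ‖f y‖ := by
  let increment (y : En n) : ℝ := (t ^ n)⁻¹ * (φ (t⁻¹ • (x - y)) - φ (t⁻¹ • (x - z))) * f y
  have increment_le (y : En n) : ‖increment y‖ ≤ L * R * t⁻¹ ^ (n + 1) * ‖f y‖ := by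
    by_cases hy : f y = 0
    · simp [increment, hy]
    have lipschitz : ‖φ (t⁻¹ • (x - y)) - φ (t⁻¹ • (x - z))‖ ≤ L * (t⁻¹ * R) := by
      refine (hL.norm_sub_le _ _).trans ?_
      rw [← smul_sub, (by abel : x - y - (x - z) = z - y), norm_smul,
        Real.norm_of_nonneg (by positivity), ← dist_eq_norm, dist_comm]
      gcongr
      exact hf hy
    calc ‖increment y‖ ≤ (t ^ n)⁻¹ * (L * (t⁻¹ * R)) * ‖f y‖ := by
          rw [norm_mul, norm_mul, Real.norm_of_nonneg (by positivity : 0 ≤ (t ^ n)⁻¹)]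
          gcongr
      _ = L * R * t⁻¹ ^ (n + 1) * ‖f y‖ := by rw [pow_succ, inv_pow]; ring
  have aestronglyMeasurable_increment : AEStronglyMeasurable increment volume :=
    have := hL.continuous
    (Continuous.aestronglyMeasurable (by fun_prop)).mul hint.aestronglyMeasurable
  have phiConv_eq : phiConv n φ f t x = ∫ y, increment y := by
    have integrable_increment : Integrable increment :=
      (hint.norm.const_mul _).mono' aestronglyMeasurable_increment (.of_forall increment_le)
    calc phiConv n φ f t x = ∫ y, (increment y + (t ^ n)⁻¹ * φ (t⁻¹ • (x - z)) * f y) := by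
          refine integral_congr_ae (.of_forall fun y => ?_)
          simp only [increment]; ring
      _ = ∫ y, increment y := by
          rw [integral_add integrable_increment (hint.const_mul _), integral_const_mul, hzero,
            mul_zero, add_zero]
  rw [phiConv_eq, ← integral_const_mul]
  exact norm_integral_le_of_norm_le (hint.norm.const_mul _) (.of_forall increment_le)

lemma eMphi_le_of_integral_eq_zero (hsupp : Function.support φ ⊆ closedBall 0 1)
    (hL : LipschitzWith L φ) (hint : Integrable f) (hzero : ∫ y, f y = 0)
    (hf : Function.support f ⊆ closedBall z R) {x : En n} (hx : 2 * R + 1 < dist x z) :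
    eMphi n φ f x ≤ ENNReal.ofReal (L * R * 2 ^ (n + 1) * ∫ y, ‖f y‖) *
      ENNReal.ofReal ((1 + ‖x - z‖) ^ (-(n + 1 : ℝ))) := by
  refine iSup_le fun ⟨t, ht⟩ => ?_
  rw [← ENNReal.ofReal_mul (by positivity), ← ofReal_norm]
  refine ENNReal.ofReal_le_ofReal ?_
  rw [dist_eq_norm] at hx
  rcases le_or_gt (1 + ‖x - z‖) (2 * t) with hlarge | hsmall
  · have inv_le : t⁻¹ ≤ 2 * (1 + ‖x - z‖)⁻¹ := by
      rw [← div_eq_mul_inv, inv_le_comm₀ ht (by positivity), inv_div]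
      linarith
    have rpow_eq : (1 + ‖x - z‖) ^ (-(n + 1 : ℝ)) = (1 + ‖x - z‖)⁻¹ ^ (n + 1) := by
      rw [Real.rpow_neg (by positivity), inv_pow]; norm_cast
    calc ‖phiConv n φ f t x‖ ≤ L * R * t⁻¹ ^ (n + 1) * ∫ y, ‖f y‖ :=
          norm_phiConv_le_of_integral_eq_zero hL hint hzero hf ht x
      _ ≤ L * R * (2 * (1 + ‖x - z‖)⁻¹) ^ (n + 1) * ∫ y, ‖f y‖ := by gcongr
      _ = L * R * 2 ^ (n + 1) * (∫ y, ‖f y‖) * (1 + ‖x - z‖) ^ (-(n + 1 : ℝ)) := by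
          rw [rpow_eq, mul_pow]; ring
  · have hfar : t + R < dist x z := by rw [dist_eq_norm]; linarith
    rw [phiConv_eq_zero_of_add_lt_dist hsupp hf ht hfar, norm_zero]
    positivity

lemma setLIntegral_compl_closedBall_eMphi_le (hsupp : Function.support φ ⊆ closedBall 0 1)
    (hL : LipschitzWith L φ) (hint : Integrable f) (hzero : ∫ y, f y = 0)
    (hf : Function.support f ⊆ closedBall z R) :
    ∫⁻ x in (closedBall z (2 * R + 1))ᶜ, eMphi n φ f x ≤
      L * R * 2 ^ (n + 1) * (∫⁻ x : En n, ENNReal.ofReal ((1 + ‖x‖) ^ (-(n + 1 : ℝ)))) *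
        ∫⁻ y, ‖f y‖ₑ := by
  set A := ENNReal.ofReal (L * R * 2 ^ (n + 1) * ∫ y, ‖f y‖) with hA
  have A_eq : A = L * R * 2 ^ (n + 1) * ∫⁻ y, ‖f y‖ₑ := by
    rw [hA, ENNReal.ofReal_mul (by positivity), ofReal_integral_norm_eq_lintegral_enorm hint]
    congr 1
    rw [ENNReal.ofReal_mul (by positivity), ENNReal.ofReal_mul (by positivity),
      ENNReal.ofReal_pow zero_le_two]
    simp
  calc ∫⁻ x in (closedBall z (2 * R + 1))ᶜ, eMphi n φ f x
      ≤ ∫⁻ x in (closedBall z (2 * R + 1))ᶜ,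
          A * ENNReal.ofReal ((1 + ‖x - z‖) ^ (-(n + 1 : ℝ))) :=
        setLIntegral_mono' measurableSet_closedBall.compl fun x hx =>
          eMphi_le_of_integral_eq_zero hsupp hL hint hzero hf (not_le.1 hx)
    _ ≤ ∫⁻ x, A * ENNReal.ofReal ((1 + ‖x - z‖) ^ (-(n + 1 : ℝ))) := setLIntegral_le_lintegral _ _
    _ = A * ∫⁻ x : En n, ENNReal.ofReal ((1 + ‖x‖) ^ (-(n + 1 : ℝ))) := by
        rw [lintegral_const_mul' _ _ ENNReal.ofReal_ne_top, lintegral_sub_right_eq_self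
          (fun x : En n => ENNReal.ofReal ((1 + ‖x‖) ^ (-(n + 1 : ℝ)))) z]
    _ = _ := by rw [A_eq]; ring

end Decay

section Atoms

variable {K L R : NNReal} {h g : En n → ℝ} {m : ℝ} {z : En n}

lemma setLIntegral_eMphi_le (hK : ∀ x, ‖φ x‖₊ ≤ K) (hsupp : Function.support φ ⊆ closedBall 0 1)
    (hm : 0 < m) (hg : AEMeasurable g) (hhg : ∀ y, ‖h y‖ₑ ≤ ‖g y‖ₑ + ENNReal.ofReal m)
    (S : Set (En n)) :
    ∫⁻ x in S, eMphi n φ h x ≤ K * volume (ball (0 : En n) 1) *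
      (3 * ENNReal.ofReal m * volume S + 4 * 5 ^ n * ∫⁻ x, llogL m (g x)) := by
  have doubling (x : En n) (r : ℝ) :
      volume (closedBall x (5 * r)) ≤ 5 ^ n * volume (closedBall x r) := by
    simpa using addHaar_closedBall_five_mul_le volume x r
  have eMphi_le (x : En n) : eMphi n φ h x ≤ K * volume (ball (0 : En n) 1) *
      (ENNReal.ofReal m + hlMaximal volume (fun y => ‖g y‖ₑ) x) := by
    refine (eMphi_le_hlMaximal hK hsupp h x).trans ?_
    gcongr
    rw [add_comm]
    exact hlMaximal_le_add_const hhg x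
  calc ∫⁻ x in S, eMphi n φ h x
      ≤ ∫⁻ x in S, K * volume (ball (0 : En n) 1) *
          (ENNReal.ofReal m + hlMaximal volume (fun y => ‖g y‖ₑ) x) := lintegral_mono eMphi_le
    _ = K * volume (ball (0 : En n) 1) *
          (ENNReal.ofReal m * volume S + ∫⁻ x in S, hlMaximal volume (fun y => ‖g y‖ₑ) x) := by
        rw [lintegral_const_mul' _ _ (by finiteness), lintegral_add_left measurable_const,
          setLIntegral_const]
    _ ≤ K * volume (ball (0 : En n) 1) * (ENNReal.ofReal m * volume S +
          (2 * ENNReal.ofReal m * volume S + 4 * 5 ^ n * ∫⁻ x, llogL m (g x))) := by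
        gcongr
        exact setLIntegral_hlMaximal_le doubling hg hm S
    _ = _ := by ring

lemma lintegral_enorm_le_of_support_subset_closedBall
    (hh : Function.support h ⊆ closedBall z R) (hhg : ∀ y, ‖h y‖ₑ ≤ ‖g y‖ₑ + ENNReal.ofReal m) :
    ∫⁻ y, ‖h y‖ₑ ≤ volume (closedBall (0 : En n) R) * ENNReal.ofReal m + ∫⁻ y, llogL m (g y) := by
  have enorm_le (y : En n) :
      ‖h y‖ₑ ≤ (closedBall z R).indicator (fun _ => ENNReal.ofReal m) y + llogL m (g y) := by
    by_cases hy : h y = 0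
    · simp [hy]
    · rw [indicator_of_mem (hh hy), add_comm]
      exact (hhg y).trans (add_le_add_left (enorm_le_llogL m (g y)) _)
  calc ∫⁻ y, ‖h y‖ₑ
      ≤ ∫⁻ y, ((closedBall z R).indicator (fun _ => ENNReal.ofReal m) y + llogL m (g y)) :=
        lintegral_mono enorm_le
    _ = _ := by
        rw [lintegral_add_left (measurable_const.indicator measurableSet_closedBall),
          lintegral_indicator_const measurableSet_closedBall, mul_comm,
          Measure.addHaar_closedBall_center]

lemma exists_lintegral_eMphi_le (hK : ∀ x, ‖φ x‖₊ ≤ K)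
    (hsupp : Function.support φ ⊆ closedBall 0 1) (hL : LipschitzWith L φ) (R : NNReal) :
    ∃ C : ℝ≥0∞, C ≠ ⊤ ∧ ∀ {h g : En n → ℝ} {m : ℝ} {z : En n}, 0 < m → Integrable h →
      ∫ y, h y = 0 → Function.support h ⊆ closedBall z R → AEMeasurable g →
      (∀ y, ‖h y‖ₑ ≤ ‖g y‖ₑ + ENNReal.ofReal m) →
      ∫⁻ x, eMphi n φ h x ≤ C * (ENNReal.ofReal m + ∫⁻ x, llogL m (g x)) := by
  let J := ∫⁻ x : En n, ENNReal.ofReal ((1 + ‖x‖) ^ (-(n + 1 : ℝ)))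
  have J_ne_top : J ≠ ⊤ := (finite_integral_one_add_norm (by simp)).ne
  let near : ℝ≥0∞ := K * volume (ball (0 : En n) 1) *
    (3 * volume (closedBall (0 : En n) (2 * R + 1)) + 4 * 5 ^ n)
  let far : ℝ≥0∞ := L * R * 2 ^ (n + 1) * J * (1 + volume (closedBall (0 : En n) R))
  have volume_closedBall_ne_top (r : ℝ) : volume (closedBall (0 : En n) r) ≠ ⊤ :=
    measure_closedBall_lt_top.ne
  have near_ne_top : near ≠ ⊤ := by unfold near; finiteness [volume_closedBall_ne_top (2 * R + 1)]
  have far_ne_top : far ≠ ⊤ := by unfold far; finiteness [volume_closedBall_ne_top R]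
  refine ⟨near + far, by finiteness, fun {h g m z} hm hint hzero hh hg hhg => ?_⟩
  set I := ∫⁻ x, llogL m (g x)
  have near_le : ∫⁻ x in closedBall z (2 * R + 1), eMphi n φ h x ≤
      near * (ENNReal.ofReal m + I) := by
    refine (setLIntegral_eMphi_le hK hsupp hm hg hhg _).trans ?_
    rw [Measure.addHaar_closedBall_center, mul_assoc _ _ (ENNReal.ofReal m + I), add_mul,
      mul_right_comm 3]
    gcongr
    exacts [le_self_add, le_add_self]
  have far_le : ∫⁻ x in (closedBall z (2 * R + 1))ᶜ, eMphi n φ h x ≤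
      far * (ENNReal.ofReal m + I) := by
    refine (setLIntegral_compl_closedBall_eMphi_le hsupp hL hint hzero hh).trans ?_
    rw [mul_assoc _ _ (ENNReal.ofReal m + I)]
    gcongr
    refine (lintegral_enorm_le_of_support_subset_closedBall hh hhg).trans ?_
    rw [add_mul, one_mul, add_comm]
    gcongr
    exacts [le_add_self, le_self_add]
  rw [← lintegral_add_compl _ measurableSet_closedBall, add_mul]
  exact add_le_add near_le far_le

end Atoms

end MaximalFunction

namespace IsTestFun

variable {n : ℕ} {φ : En n → ℝ}

lemma continuous (hφ : IsTestFun n φ) : Continuous φ := hφ.1.continuous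

lemma support_subset (hφ : IsTestFun n φ) : Function.support φ ⊆ closedBall 0 1 :=
  fun x hx => by_contra fun hmem => hx (hφ.2.1 x hmem)

lemma hasCompactSupport (hφ : IsTestFun n φ) : HasCompactSupport φ :=
  .intro (isCompact_closedBall 0 1) hφ.2.1

lemma exists_nnnorm_le (hφ : IsTestFun n φ) : ∃ K : NNReal, ∀ x, ‖φ x‖₊ ≤ K := by
  obtain ⟨K, hK⟩ := hφ.hasCompactSupport.exists_bound_of_continuous hφ.continuous
  exact ⟨K.toNNReal, fun x => NNReal.coe_le_coe.1 ((hK x).trans (Real.le_coe_toNNReal K))⟩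

lemma exists_lipschitzWith (hφ : IsTestFun n φ) : ∃ L : NNReal, LipschitzWith L φ :=
  ContDiff.lipschitzWith_of_hasCompactSupport hφ.hasCompactSupport hφ.1 (by simp)

end IsTestFun

section Cubes

variable {n : ℕ}

lemma Qk_eq_preimage_pi (n : ℕ) (k : Fin n → ℤ) :
    Qk n k = (MeasurableEquiv.toLp 2 (Fin n → ℝ)).symm ⁻¹'
      univ.pi fun i => Ioo ((k i : ℝ) - 1 / 2) ((k i : ℝ) + 1 / 2) := by
  ext x
  simp [Qk]

lemma measurableSet_Qk (n : ℕ) (k : Fin n → ℤ) : MeasurableSet (Qk n k) := by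
  rw [Qk_eq_preimage_pi]
  exact (MeasurableEquiv.measurable _) (.univ_pi fun i => measurableSet_Ioo)

lemma volume_Qk (n : ℕ) (k : Fin n → ℤ) : volume (Qk n k) = 1 := by
  rw [Qk_eq_preimage_pi,
    (EuclideanSpace.volume_preserving_symm_measurableEquiv_toLp (Fin n)).measure_preimage
      (MeasurableSet.univ_pi fun i => measurableSet_Ioo).nullMeasurableSet, volume_pi_pi]
  refine Finset.prod_eq_one fun i _ => ?_
  rw [Real.volume_Ioo, ENNReal.ofReal_eq_one]
  ring

lemma Qk_subset_closedBall (n : ℕ) (k : Fin n → ℤ) : Qk n k ⊆ closedBall (zv n k) n := by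
  intro y hy
  rw [mem_closedBall, EuclideanSpace.dist_eq, Real.sqrt_le_left (by positivity)]
  calc ∑ i, dist (y i) (zv n k i) ^ 2 ≤ ∑ _i : Fin n, (1 : ℝ) := by
        refine Finset.sum_le_sum fun i _ => ?_
        have abs_le : |y i - k i| ≤ 1 := abs_le.2 ⟨by linarith [(hy i).1], by linarith [(hy i).2]⟩
        exact pow_le_one₀ dist_nonneg abs_le
    _ = n := by simp
    _ ≤ (n : ℝ) ^ 2 := by exact_mod_cast Nat.le_self_pow two_ne_zero n

instance isProbabilityMeasure_restrict_Qk (k : Fin n → ℤ) :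
    IsProbabilityMeasure (volume.restrict (Qk n k)) := ⟨by simp [volume_Qk]⟩

/-- The part `h_k = f_k - (∫ f_k) χ_{Q_k}` of `f` on the cube `Q_k`, corrected to have mean zero. -/
def cubePart (n : ℕ) (f : En n → ℝ) (k : Fin n → ℤ) : En n → ℝ :=
  (Qk n k).indicator fun y => f y - ∫ z in Qk n k, f z

variable {f : En n → ℝ} {k : Fin n → ℤ}

lemma support_cubePart_subset (f : En n → ℝ) (k : Fin n → ℤ) :
    Function.support (cubePart n f k) ⊆ closedBall (zv n k) n :=
  support_indicator_subset.trans (Qk_subset_closedBall n k)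

lemma integrable_cubePart (hf : IntegrableOn f (Qk n k)) : Integrable (cubePart n f k) :=
  (integrable_indicator_iff (measurableSet_Qk n k)).2 (hf.sub (integrable_const _))

lemma integral_cubePart (hf : IntegrableOn f (Qk n k)) : ∫ y, cubePart n f k y = 0 := by
  rw [cubePart, integral_indicator (measurableSet_Qk n k), integral_sub hf (integrable_const _)]
  simp

lemma enorm_sub_setIntegral_Qk_le (f : En n → ℝ) (k : Fin n → ℤ) (a : ℝ) :
    ‖a - ∫ z in Qk n k, f z‖ₑ ≤ ‖a‖ₑ + ENNReal.ofReal (muk n f k) := by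
  refine enorm_sub_le.trans (add_le_add_right ?_ _)
  rw [Real.enorm_eq_ofReal_abs]
  exact ENNReal.ofReal_le_ofReal abs_integral_le_integral_abs

lemma enorm_cubePart_le (f : En n → ℝ) (k : Fin n → ℤ) (y : En n) :
    ‖cubePart n f k y‖ₑ ≤ ‖(Qk n k).indicator f y‖ₑ + ENNReal.ofReal (muk n f k) := by
  by_cases hy : y ∈ Qk n k
  · simpa [cubePart, hy] using enorm_sub_setIntegral_Qk_le f k (f y)
  · simp [cubePart, hy]

lemma ofReal_muk_le (hf : IntegrableOn f (Qk n k)) (m : ℝ) :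
    ENNReal.ofReal (muk n f k) ≤ ∫⁻ x in Qk n k, llogL m (f x) :=
  (ofReal_integral_norm_eq_lintegral_enorm hf).trans_le
    (lintegral_mono fun x => enorm_le_llogL m (f x))

lemma lintegral_llogL_indicator_Qk (f : En n → ℝ) (k : Fin n → ℤ) (m : ℝ) :
    ∫⁻ x, llogL m ((Qk n k).indicator f x) = ∫⁻ x in Qk n k, llogL m (f x) := by
  rw [← lintegral_indicator (measurableSet_Qk n k)]
  exact lintegral_congr fun x =>
    (congrFun (indicator_comp_of_zero (llogL_zero_right m)) x).symm

lemma cubePart_ae_eq_zero_of_muk_eq_zero (hf : IntegrableOn f (Qk n k)) (hmuk : muk n f k = 0) :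
    cubePart n f k =ᵐ[volume] 0 := by
  have ae_eq_zero : f =ᵐ[volume.restrict (Qk n k)] 0 :=
    ((integral_eq_zero_iff_of_nonneg (fun _ => abs_nonneg _) hf.abs).1 hmuk).mono
      fun x hx => abs_eq_zero.1 hx
  refine (ae_restrict_iff' (measurableSet_Qk n k)).1 ae_eq_zero |>.mono fun x hx => ?_
  by_cases hxQ : x ∈ Qk n k
  · simp [cubePart, hx hxQ, integral_congr_ae ae_eq_zero]
  · simp [cubePart, hxQ]

lemma lintegral_enorm_cubePart_le (hf : IntegrableOn f (Qk n k)) (m : ℝ) :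
    ∫⁻ y, ‖cubePart n f k y‖ₑ ≤ 2 * ∫⁻ x in Qk n k, llogL m (f x) := by
  calc ∫⁻ y, ‖cubePart n f k y‖ₑ = ∫⁻ y in Qk n k, ‖f y - ∫ z in Qk n k, f z‖ₑ := by
        simp only [cubePart, enorm_indicator_eq_indicator_enorm,
          lintegral_indicator (measurableSet_Qk n k)]
    _ ≤ ∫⁻ y in Qk n k, (llogL m (f y) + ENNReal.ofReal (muk n f k)) := by
        gcongr with y
        exact (enorm_sub_setIntegral_Qk_le f k (f y)).trans (by gcongr; exact enorm_le_llogL m _)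
    _ = (∫⁻ y in Qk n k, llogL m (f y)) + ENNReal.ofReal (muk n f k) := by
        rw [lintegral_add_right _ measurable_const, setLIntegral_const, volume_Qk, mul_one]
    _ ≤ 2 * ∫⁻ x in Qk n k, llogL m (f x) := by
        rw [two_mul]
        gcongr
        exact ofReal_muk_le hf m

lemma IsTestFun.exists_lintegral_eMphi_cubePart_le {φ : En n → ℝ} (hφ : IsTestFun n φ) :
    ∃ C : ℝ≥0∞, C ≠ ⊤ ∧ ∀ {f : En n → ℝ} {k : Fin n → ℤ}, IntegrableOn f (Qk n k) →
      ∫⁻ x, eMphi n φ (cubePart n f k) x ≤ C * ∫⁻ x in Qk n k, llogL (muk n f k) (f x) := by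
  obtain ⟨K, hK⟩ := hφ.exists_nnnorm_le
  obtain ⟨L, hL⟩ := hφ.exists_lipschitzWith
  obtain ⟨C, hC, bound⟩ := exists_lintegral_eMphi_le hK hφ.support_subset hL n
  refine ⟨C * 2, by finiteness, fun {f k} hf => ?_⟩
  rcases (integral_nonneg fun _ => abs_nonneg _ : 0 ≤ muk n f k).eq_or_lt with hmuk | hmuk
  · simp [eMphi_eq_zero_of_ae_eq_zero (cubePart_ae_eq_zero_of_muk_eq_zero hf hmuk.symm)]
  calc ∫⁻ x, eMphi n φ (cubePart n f k) x
      ≤ C * (ENNReal.ofReal (muk n f k) +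
          ∫⁻ x, llogL (muk n f k) ((Qk n k).indicator f x)) :=
        bound hmuk (integrable_cubePart hf) (integral_cubePart hf) (support_cubePart_subset f k)
          ((aemeasurable_indicator_iff (measurableSet_Qk n k)).2 hf.aemeasurable)
          (enorm_cubePart_le f k)
    _ ≤ C * ((∫⁻ x in Qk n k, llogL (muk n f k) (f x)) +
          ∫⁻ x in Qk n k, llogL (muk n f k) (f x)) := by
        rw [lintegral_llogL_indicator_Qk]
        gcongr
        exact ofReal_muk_le hf (muk n f k)
    _ = C * 2 * ∫⁻ x in Qk n k, llogL (muk n f k) (f x) := by ring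

end Cubes

/-- **Proposition (the localized part is in `H^1`).**
If `f` is integrable and satisfies the local `L log L` condition
`∑_k ∫_{Q_k} |f_k|(1 + ln₊(|f_k|/μ_k)) < ∞`, then, with
`h_k = f_k - (∫ f_k) χ_{Q_k}` and `h = ∑_k h_k`, one has
`∑_k ‖𝓜_φ h_k‖_{L^1} < ∞` for every admissible `φ`, and `h ∈ H^1(ℝ^n)`. -/
theorem localized_part_in_H1 (n : ℕ) (hn : 1 ≤ n) (f : En n → ℝ)
    (hf : Integrable f)
    (hcond : ∑' k : Fin n → ℤ,
        ∫⁻ x in Qk n k, ENNReal.ofReal (|f x| * (1 + lnp (|f x| / muk n f k))) < ⊤)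
    (hk : (Fin n → ℤ) → En n → ℝ)
    (hhk : ∀ k, hk k = (Qk n k).indicator (fun y => f y - ∫ z in Qk n k, f z))
    (h : En n → ℝ) (hh : ∀ x, h x = ∑' k : Fin n → ℤ, hk k x) :
    (∀ φ : En n → ℝ, IsTestFun n φ →
        ∑' k : Fin n → ℤ, ∫⁻ x, ENNReal.ofReal (Mphi n φ (hk k) x) < ⊤) ∧
      MemH1 n h := by
  obtain rfl : hk = cubePart n f := funext hhk
  obtain rfl : h = fun x => ∑' k, cubePart n f k x := funext hh
  have tsum_eMphi_lt_top (φ : En n → ℝ) (hφ : IsTestFun n φ) :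
      ∑' k, ∫⁻ x, eMphi n φ (cubePart n f k) x < ⊤ := by
    obtain ⟨C, hC, bound⟩ := hφ.exists_lintegral_eMphi_cubePart_le
    refine (ENNReal.tsum_le_tsum fun k => bound hf.integrableOn).trans_lt ?_
    rw [ENNReal.tsum_mul_left]
    exact ENNReal.mul_lt_top hC.lt_top hcond
  refine ⟨fun φ hφ => ?_, fun φ hφ => ?_⟩
  · simp only [Mphi_eq_toReal_eMphi]
    exact (ENNReal.tsum_le_tsum fun k => lintegral_mono fun x => ENNReal.ofReal_toReal_le).trans_lt
      (tsum_eMphi_lt_top φ hφ)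
  · have tsum_enorm_ne_top : ∑' k, ∫⁻ x, ‖cubePart n f k x‖ₑ ≠ ⊤ := by
      refine ne_top_of_le_ne_top ?_ (ENNReal.tsum_le_tsum fun k =>
        lintegral_enorm_cubePart_le hf.integrableOn (muk n f k))
      rw [ENNReal.tsum_mul_left]
      exact ENNReal.mul_ne_top ENNReal.ofNat_ne_top hcond.ne
    obtain ⟨K, hK⟩ := hφ.exists_nnnorm_le
    exact integrable_Mphi_tsum hφ.continuous hK (fun k => integrable_cubePart hf.integrableOn)
      tsum_enorm_ne_top (tsum_eMphi_lt_top φ hφ).ne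
end
end

section
/- Let n ≥ 1 and let f be an integrable function on ℝ^n such that ∫_{ℝ^n} |f(x)| ( 1 + ln₊ ln(e+|f(x)|) + ln₊ ln(e+|x|) ) dx < ∞. Then T_θ f = f − (∫ f dx)·θ belongs to H_log(ℝ^n); that is, for every smooth φ supported in the closed unit ball with ∫φ = 1 one has ∫_{ℝ^n} Ψ(x, 𝓜_φ(T_θ f)(x)) dx < ∞. -/
open MeasureTheory Real Set Metric ENNReal

noncomputable section

/-- The Musielak function `Ψ(x,t) = t / (ln(e+t) + ln(e+|x|))` defining `L_log`. -/
def Psi (n : ℕ) (x : En n) (t : ℝ) : ℝ :=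
  t / (Real.log (Real.exp 1 + t) + Real.log (Real.exp 1 + ‖x‖))

/-!
Let `g = T_θ f`. Since `g` has mean zero, `φ_t (x - y)` may be replaced by `φ_t (x - y) - φ_t x`
when `t ≳ 1 + |x|`. Hence, up to constants, `𝓜_φ g x` is at most a local maximal function (radii
`t < (1 + |x|) / 16`) plus a far part `∫ |g y| k(x, y) dy`, where
`k(x, y) = (1 + |x|)^(-n) min(1, |y| / (1 + |x|))`.

On the local part, a weight which is essentially constant on the balls involved satisfies a weighted
weak type `(1,1)` inequality, by Vitali's covering lemma. Apply it on each dyadic level `2 ^ j` with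
the weight `1 / (ln (e + 2 ^ j) + ln (e + |x|))`. The levels `1 ≤ 2 ^ j < |g y|` contribute a
harmonic sum of length `~ ln |g y|`, that is `ln ln |g y|`; of the levels below `1`, only the
`O(ln (e + |y|))` ones with `2 ^ j (1 + |y|)^(n+1) ≥ 1` matter, and their weight is at most
`1 / ln (e + |y|)`.

On the far part, `∫ k(x, y) / ln (e + |x|) dx` is again a harmonic sum, over the dyadic shells
`1 + |x| ~ 2 ^ k ≤ 1 + |y|`, hence `O(1 + ln ln (e + |y|))`.
-/

open Module
open scoped NNReal

/-! ### Iterated logarithms -/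

/-- The iterated logarithm `ln₊ ln (e + t)` of the integrability condition. -/
def logLog (t : ℝ) : ℝ := lnp (Real.log (Real.exp 1 + t))

lemma logLog_nonneg (t : ℝ) : 0 ≤ logLog t := le_max_right _ _

lemma one_le_log_exp_one_add {t : ℝ} (ht : 0 ≤ t) : 1 ≤ Real.log (Real.exp 1 + t) := by
  rw [Real.le_log_iff_exp_le (by positivity)]
  linarith

lemma logLog_eq_log_log {t : ℝ} (ht : 0 ≤ t) :
    logLog t = Real.log (Real.log (Real.exp 1 + t)) :=
  max_eq_left (Real.log_nonneg (one_le_log_exp_one_add ht))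

lemma monotoneOn_logLog : MonotoneOn logLog (Ici 0) := by
  intro s (hs : 0 ≤ s) t (ht : 0 ≤ t) hst
  have := one_le_log_exp_one_add hs
  rw [logLog_eq_log_log hs, logLog_eq_log_log ht]
  gcongr

lemma one_add_logLog_mul_le {c t : ℝ} (hc : 1 ≤ c) (ht : 0 ≤ t) :
    1 + logLog (c * t) ≤ c * (1 + logLog t) := by
  have hL := one_le_log_exp_one_add ht
  have hLc : 1 ≤ Real.log (Real.exp 1 + c * t) := one_le_log_exp_one_add (by positivity)
  have hc_log : Real.log c ≤ c - 1 := Real.log_le_sub_one_of_pos (by linarith)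
  have hlog : Real.log (Real.exp 1 + c * t) ≤ c * Real.log (Real.exp 1 + t) := by
    calc Real.log (Real.exp 1 + c * t)
        ≤ Real.log (c * (Real.exp 1 + t)) := by
          gcongr
          nlinarith [Real.exp_pos 1]
      _ = Real.log c + Real.log (Real.exp 1 + t) :=
          Real.log_mul (by positivity) (by positivity)
      _ ≤ c * Real.log (Real.exp 1 + t) := by nlinarith
  have hloglog : logLog (c * t) ≤ (c - 1) + logLog t := by
    rw [logLog_eq_log_log (by positivity), logLog_eq_log_log ht]
    calc Real.log (Real.log (Real.exp 1 + c * t))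
        ≤ Real.log (c * Real.log (Real.exp 1 + t)) := by gcongr
      _ = Real.log c + Real.log (Real.log (Real.exp 1 + t)) :=
          Real.log_mul (by positivity) (by positivity)
      _ ≤ (c - 1) + Real.log (Real.log (Real.exp 1 + t)) := by gcongr
  nlinarith [logLog_nonneg t]

lemma log_exp_one_add_le_two_mul {a b : ℝ} (ha : 0 ≤ a) (hb : 0 ≤ b)
    (hab : 1 + a ≤ 2 * (1 + b)) :
    Real.log (Real.exp 1 + a) ≤ 2 * Real.log (Real.exp 1 + b) := by
  have he : 2 ≤ Real.exp 1 := by linarith [Real.add_one_le_exp 1]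
  calc Real.log (Real.exp 1 + a) ≤ Real.log ((Real.exp 1 + b) ^ 2) := by
        gcongr
        nlinarith
    _ = 2 * Real.log (Real.exp 1 + b) := by rw [Real.log_pow]; norm_num

lemma succ_div_three_le_log {k : ℕ} {r : ℝ} (hr : 0 ≤ r) (hk : (2 : ℝ) ^ k ≤ 1 + r) :
    ((k : ℝ) + 1) / 3 ≤ Real.log (Real.exp 1 + r) := by
  have hlog : k * Real.log 2 ≤ Real.log (Real.exp 1 + r) := by
    rw [← Real.log_pow]
    gcongr
    linarith [Real.add_one_le_exp 1]
  nlinarith [one_le_log_exp_one_add hr, Real.log_two_gt_d9, k.cast_nonneg (α := ℝ)]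

lemma log_exp_one_add_one_add_pow_le (m : ℕ) {r : ℝ} (hr : 0 ≤ r) :
    Real.log (Real.exp 1 + (1 + r) ^ m) ≤ (m + 2) * Real.log (Real.exp 1 + r) := by
  have he : 2 ≤ Real.exp 1 := by linarith [Real.add_one_le_exp 1]
  rw [← Nat.cast_ofNat, ← Nat.cast_add, ← Real.log_pow]
  gcongr
  have hpow : (1 + r) ^ m ≤ (Real.exp 1 + r) ^ m := by gcongr; linarith
  have hone : 1 ≤ (Real.exp 1 + r) ^ m := one_le_pow₀ (by linarith)
  calc Real.exp 1 + (1 + r) ^ m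
      ≤ (Real.exp 1 + r) * (Real.exp 1 + r) ^ m + (Real.exp 1 + r) ^ m := by nlinarith
    _ ≤ (Real.exp 1 + r) ^ (m + 2) := by
        have hsq : Real.exp 1 + r + 1 ≤ (Real.exp 1 + r) ^ 2 := by nlinarith
        rw [pow_add]
        nlinarith [mul_le_mul_of_nonneg_left hsq (zero_le_one.trans hone)]

/-! ### Truncated dyadic sums -/

lemma exists_nat_le_two_pow_le_three_mul_log {v : ℝ} (hv : 0 ≤ v) :
    ∃ m : ℕ, v ≤ 2 ^ m ∧ (m : ℝ) ≤ 3 * Real.log (Real.exp 1 + v) := by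
  have hL := one_le_log_exp_one_add hv
  set L := Real.log (Real.exp 1 + v)
  refine ⟨⌈2 * L⌉₊, ?_, by linarith [Nat.ceil_lt_add_one (a := 2 * L) (by linarith)]⟩
  have hceil : 2 * L ≤ (⌈2 * L⌉₊ : ℝ) := Nat.le_ceil _
  have hlog : L ≤ Real.log ((2 : ℝ) ^ ⌈2 * L⌉₊) := by
    rw [Real.log_pow]
    nlinarith [Real.log_two_gt_d9]
  have := (Real.log_le_log_iff (by positivity) (by positivity)).1 hlog
  linarith [Real.exp_pos 1]

lemma tsum_min_one_mul_le {v : ℝ} (hv : 0 ≤ v) {m : ℕ} (hvm : v ≤ 2 ^ m) {a : ℕ → ℝ}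
    (ha : ∀ k, 0 ≤ a k) (ha' : ∀ k, a k ≤ 1) :
    ∑' k : ℕ, ENNReal.ofReal (min 1 (v / 2 ^ k) * a k) ≤
      ENNReal.ofReal (∑ k ∈ Finset.range m, a k + 2) := by
  have hhead : ∑ k ∈ Finset.range m, ENNReal.ofReal (min 1 (v / 2 ^ k) * a k) ≤
      ENNReal.ofReal (∑ k ∈ Finset.range m, a k) := by
    rw [ENNReal.ofReal_sum_of_nonneg fun k _ => ha k]
    gcongr with k
    exact mul_le_of_le_one_left (ha k) (min_le_left _ _)
  have htail : ∑' k : ℕ, ENNReal.ofReal (min 1 (v / 2 ^ (k + m)) * a (k + m)) ≤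
      ENNReal.ofReal 2 := by
    have hgeom := ENNReal.ofReal_tsum_of_nonneg (f := fun k : ℕ => (1 / 2 : ℝ) ^ k)
      (fun k => by positivity) summable_geometric_two
    rw [tsum_geometric_two] at hgeom
    rw [hgeom]
    gcongr with k
    calc min 1 (v / 2 ^ (k + m)) * a (k + m) ≤ v / 2 ^ (k + m) :=
          (mul_le_of_le_one_right (by positivity) (ha' _)).trans (min_le_right _ _)
      _ ≤ 2 ^ m / 2 ^ (k + m) := by gcongr
      _ = (1 / 2) ^ k := by rw [pow_add, one_div, inv_pow]; field_simp
  rw [← ENNReal.summable.sum_add_tsum_nat_add' (k := m),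
    ENNReal.ofReal_add (Finset.sum_nonneg fun k _ => ha k) zero_le_two]
  exact add_le_add hhead htail

lemma tsum_min_one_div_two_pow_le {v : ℝ} (hv : 0 ≤ v) :
    ∑' k : ℕ, ENNReal.ofReal (min 1 (v / 2 ^ k)) ≤
      ENNReal.ofReal (5 * Real.log (Real.exp 1 + v)) := by
  obtain ⟨m, hvm, hm⟩ := exists_nat_le_two_pow_le_three_mul_log hv
  have h := tsum_min_one_mul_le hv hvm (a := fun _ => 1) (fun _ => zero_le_one) fun _ => le_rfl
  simp only [mul_one, Finset.sum_const, Finset.card_range, nsmul_eq_mul] at h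
  refine h.trans (ENNReal.ofReal_le_ofReal ?_)
  linarith [one_le_log_exp_one_add hv]

/- The harmonic sum over the `O(ln (e + v))` untruncated terms produces the second logarithm. -/
lemma tsum_min_one_div_two_pow_div_succ_le {v : ℝ} (hv : 0 ≤ v) :
    ∑' k : ℕ, ENNReal.ofReal (min 1 (v / 2 ^ k) / (k + 1)) ≤
      ENNReal.ofReal (5 * (1 + logLog v)) := by
  obtain ⟨m, hvm, hm⟩ := exists_nat_le_two_pow_le_three_mul_log hv
  have h := tsum_min_one_mul_le hv hvm (a := fun k => ((k : ℝ) + 1)⁻¹)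
    (fun k => by positivity) fun k => inv_le_one_of_one_le₀ (by simp)
  simp only [← div_eq_mul_inv] at h
  refine h.trans (ENNReal.ofReal_le_ofReal ?_)
  have hL := one_le_log_exp_one_add hv
  have hharmonic : ∑ k ∈ Finset.range m, ((k : ℝ) + 1)⁻¹ ≤ 1 + Real.log m := by
    simpa [harmonic] using harmonic_le_one_add_log m
  have hlog : Real.log m ≤ 2 + logLog v := by
    rcases m.eq_zero_or_pos with rfl | hm_pos
    · simpa using add_nonneg zero_le_two (logLog_nonneg v)
    · calc Real.log m ≤ Real.log (3 * Real.log (Real.exp 1 + v)) := by gcongr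
        _ = Real.log 3 + logLog v := by
            rw [logLog_eq_log_log hv, Real.log_mul (by norm_num) (by positivity)]
        _ ≤ 2 + logLog v := by
            gcongr
            linarith [Real.log_le_sub_one_of_pos (x := 3) (by norm_num)]
  linarith [logLog_nonneg v]

/-! ### The local maximal function -/

lemma lowerSemicontinuous_measure_ball {X : Type*} [PseudoMetricSpace X] [MeasurableSpace X]
    (ν : Measure X) (t : ℝ) : LowerSemicontinuous fun x => ν (ball x t) := by
  intro x a ha
  obtain ⟨u, hu_mono, hu_lt, hu_lim⟩ := exists_seq_strictMono_tendsto t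
  have hball : ball x t = ⋃ k, ball x (u k) := by
    refine Subset.antisymm (fun y hy => ?_) (iUnion_subset fun k => ball_subset_ball (hu_lt k).le)
    obtain ⟨k, hk⟩ := (hu_lim.eventually_const_lt (mem_ball.1 hy)).exists
    exact mem_iUnion.2 ⟨k, hk⟩
  have hmono : Monotone fun k => ball x (u k) := fun i j hij =>
    ball_subset_ball (hu_mono.monotone hij)
  change a < ν (ball x t) at ha
  rw [hball, hmono.measure_iUnion, lt_iSup_iff] at ha
  obtain ⟨k, hk⟩ := ha
  filter_upwards [ball_mem_nhds x (sub_pos.2 (hu_lt k))] with y hy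
  refine hk.trans_le (measure_mono (ball_subset_ball' ?_))
  rw [dist_comm]
  linarith [mem_ball.1 hy]

section LocalMaximal

variable {E : Type*} [NormedAddCommGroup E]

/-- A weight that changes by at most a factor `K` between points of comparable size. -/
def SlowlyVarying (K : ℝ≥0) (ω : E → ℝ≥0∞) : Prop :=
  ∀ z y, 1 + ‖z‖ ≤ 2 * (1 + ‖y‖) → 1 + ‖y‖ ≤ 2 * (1 + ‖z‖) → ω z ≤ K * ω y

variable [MeasurableSpace E]

/-- The local maximal function of `ν` relative to `μ`: the supremum of the averages
`ν (ball x t) / μ (ball x t)` over radii `t` small compared with `1 + ‖x‖`, so that slowly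
varying weights are essentially constant on the balls involved. -/
def localMaximal (μ ν : Measure E) (x : E) : ℝ≥0∞ :=
  ⨆ t ∈ Ioo 0 ((1 + ‖x‖) / 16), ν (ball x t) / μ (ball x t)

lemma lt_localMaximal_iff {μ ν : Measure E} {s : ℝ≥0∞} {x : E} :
    s < localMaximal μ ν x ↔
      ∃ t ∈ Ioo 0 ((1 + ‖x‖) / 16), s < ν (ball x t) / μ (ball x t) := by
  simp only [localMaximal, lt_iSup_iff, exists_prop]

lemma lt_localMaximal_withDensity_indicator {μ : Measure E} [OpensMeasurableSpace E]
    {G : E → ℝ≥0∞} {s : ℝ≥0∞} {x : E} (hx : 2 * s < localMaximal μ (μ.withDensity G) x) :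
    s < localMaximal μ (μ.withDensity ({y | s < G y}.indicator G)) x := by
  obtain ⟨t, ht, hlt⟩ := lt_localMaximal_iff.1 hx
  refine lt_localMaximal_iff.2 ⟨t, ht, ?_⟩
  rw [withDensity_apply _ measurableSet_ball] at hlt ⊢
  have hsplit : ∫⁻ y in ball x t, G y ∂μ ≤
      ∫⁻ y in ball x t, {y | s < G y}.indicator G y ∂μ + s * μ (ball x t) := by
    rw [← setLIntegral_const, ← lintegral_add_right _ measurable_const]
    gcongr with y
    by_cases hy : s < G y
    · simp [hy]
    · simp only [mem_ofPred_eq, hy, not_false_eq_true, indicator_of_notMem, zero_add]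
      exact not_lt.1 hy
  contrapose! hlt
  calc (∫⁻ y in ball x t, G y ∂μ) / μ (ball x t)
      ≤ (∫⁻ y in ball x t, {y | s < G y}.indicator G y ∂μ) / μ (ball x t) +
          s * μ (ball x t) / μ (ball x t) := by
        rw [← ENNReal.add_div]
        gcongr
    _ ≤ s + s := add_le_add hlt (ENNReal.div_le_of_le_mul le_rfl)
    _ = 2 * s := (two_mul s).symm

variable [NormedSpace ℝ E] [FiniteDimensional ℝ E] [BorelSpace E]
  (μ : Measure E) [μ.IsAddHaarMeasure]

lemma addHaar_closedBall_mul_eq_mul_ball (x : E) {a t : ℝ} (ha : 0 ≤ a) (ht : 0 < t) :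
    μ (closedBall x (a * t)) = ENNReal.ofReal (a ^ finrank ℝ E) * μ (ball x t) := by
  rw [Measure.addHaar_closedBall _ _ (by positivity), Measure.addHaar_ball_of_pos _ _ ht,
    mul_pow, ENNReal.ofReal_mul (by positivity), mul_assoc]

lemma isOpen_lt_localMaximal (ν : Measure E) (s : ℝ≥0∞) :
    IsOpen {x | s < localMaximal μ ν x} := by
  have hunion : {x | s < localMaximal μ ν x} =
      ⋃ t > 0, {x | t < (1 + ‖x‖) / 16} ∩ {x | s * μ (ball 0 t) < ν (ball x t)} := by
    ext x
    simp only [mem_ofPred_eq, lt_localMaximal_iff, mem_Ioo, mem_iUnion, mem_inter_iff, exists_prop,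
      and_assoc]
    refine exists_congr fun t => and_congr_right fun ht => and_congr_right fun _ => ?_
    rw [← Measure.addHaar_ball_center μ x,
      ENNReal.lt_div_iff_mul_lt (Or.inl (measure_ball_pos _ _ ht).ne')
        (Or.inl measure_ball_lt_top.ne)]
  rw [hunion]
  refine isOpen_biUnion fun t _ => ?_
  exact (isOpen_lt continuous_const (by fun_prop)).inter
    ((lowerSemicontinuous_measure_ball ν t).isOpen_preimage _)

variable {μ} {K : ℝ≥0} {ω : E → ℝ≥0∞}

lemma SlowlyVarying.mul_setLIntegral_closedBall_le (hω : SlowlyVarying K ω) {ν : Measure E}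
    {s : ℝ≥0∞} {x : E} {t : ℝ} (ht : t ∈ Ioo 0 ((1 + ‖x‖) / 16))
    (hs : s < ν (ball x t) / μ (ball x t)) :
    s * ∫⁻ z in closedBall x (5 * t), ω z ∂μ ≤
      K * 5 ^ finrank ℝ E * ∫⁻ y in ball x t, ω y ∂ν := by
  have hμ_pos : μ (ball x t) ≠ 0 := (measure_ball_pos _ _ ht.1).ne'
  have hμ_fin : μ (ball x t) ≠ ⊤ := measure_ball_lt_top.ne
  have hdilate : μ (closedBall x (5 * t)) = 5 ^ finrank ℝ E * μ (ball x t) := by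
    rw [addHaar_closedBall_mul_eq_mul_ball μ x (by norm_num) ht.1,
      ENNReal.ofReal_pow (by norm_num), ENNReal.ofReal_ofNat]
  have hpointwise : ∀ y ∈ ball x t,
      ∫⁻ z in closedBall x (5 * t), ω z ∂μ ≤ K * μ (closedBall x (5 * t)) * ω y := by
    intro y hy
    calc ∫⁻ z in closedBall x (5 * t), ω z ∂μ
        ≤ ∫⁻ _ in closedBall x (5 * t), K * ω y ∂μ := by
          refine setLIntegral_mono' measurableSet_closedBall fun z hz => ?_
          rw [mem_ball, dist_eq_norm] at hy
          rw [mem_closedBall, dist_eq_norm] at hz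
          have hxy := abs_le.1 (abs_norm_sub_norm_le y x)
          have hxz := abs_le.1 (abs_norm_sub_norm_le z x)
          have := ht.2
          apply hω <;> linarith [norm_nonneg x]
      _ = K * μ (closedBall x (5 * t)) * ω y := by rw [setLIntegral_const]; ring
  rw [← ENNReal.mul_le_mul_iff_left hμ_pos hμ_fin]
  calc s * (∫⁻ z in closedBall x (5 * t), ω z ∂μ) * μ (ball x t)
      = (∫⁻ z in closedBall x (5 * t), ω z ∂μ) * (s * μ (ball x t)) := by ring
    _ ≤ (∫⁻ z in closedBall x (5 * t), ω z ∂μ) * ν (ball x t) := by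
        gcongr
        exact ENNReal.mul_le_of_le_div hs.le
    _ = ∫⁻ _ in ball x t, ∫⁻ z in closedBall x (5 * t), ω z ∂μ ∂ν := by
        rw [setLIntegral_const]
    _ ≤ ∫⁻ y in ball x t, K * μ (closedBall x (5 * t)) * ω y ∂ν :=
        setLIntegral_mono' measurableSet_ball hpointwise
    _ = K * μ (closedBall x (5 * t)) * ∫⁻ y in ball x t, ω y ∂ν :=
        lintegral_const_mul' _ _ (ENNReal.mul_ne_top ENNReal.coe_ne_top
          measure_closedBall_lt_top.ne)
    _ = K * 5 ^ finrank ℝ E * (∫⁻ y in ball x t, ω y ∂ν) * μ (ball x t) := by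
        rw [hdilate]; ring

/- On a bounded set the admissible radii are bounded, so Vitali's covering lemma applies. -/
lemma SlowlyVarying.mul_setLIntegral_lt_localMaximal_inter_ball_le (hω : SlowlyVarying K ω)
    (ν : Measure E) (s : ℝ≥0∞) (R : ℝ) :
    s * ∫⁻ x in {x | s < localMaximal μ ν x} ∩ ball 0 R, ω x ∂μ ≤
      K * 5 ^ finrank ℝ E * ∫⁻ y, ω y ∂ν := by
  have hradius : ∀ x ∈ {x | s < localMaximal μ ν x} ∩ ball 0 R,
      ∃ t ∈ Ioo 0 ((1 + ‖x‖) / 16), s < ν (ball x t) / μ (ball x t) :=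
    fun x hx => lt_localMaximal_iff.1 hx.1
  choose! t ht hts using hradius
  obtain ⟨u, hu, hdisj, hcover⟩ :=
    Vitali.exists_disjoint_subfamily_covering_enlargement_closedBall
      ({x | s < localMaximal μ ν x} ∩ ball 0 R) id t ((1 + R) / 16)
      (fun x hx => by linarith [(ht x hx).2, mem_ball_zero_iff.1 hx.2]) 5 (by norm_num)
  have hcountable : u.Countable := hdisj.countable_of_nonempty_interior fun x hx =>
    ⟨x, ball_subset_interior_closedBall (mem_ball_self (ht x (hu hx)).1)⟩
  have : Countable u := hcountable.to_subtype
  have hsubset : {x | s < localMaximal μ ν x} ∩ ball 0 R ⊆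
      ⋃ x : u, closedBall x.1 (5 * t x) := fun x hx => by
    obtain ⟨b, hb, hsub⟩ := hcover x hx
    exact mem_iUnion.2 ⟨⟨b, hb⟩, hsub (mem_closedBall_self (ht x hx).1.le)⟩
  calc s * ∫⁻ x in {x | s < localMaximal μ ν x} ∩ ball 0 R, ω x ∂μ
      ≤ s * ∑' x : u, ∫⁻ z in closedBall x.1 (5 * t x), ω z ∂μ := by
        gcongr
        exact (lintegral_mono_set hsubset).trans (lintegral_iUnion_le _ _)
    _ = ∑' x : u, s * ∫⁻ z in closedBall x.1 (5 * t x), ω z ∂μ := ENNReal.tsum_mul_left.symm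
    _ ≤ ∑' x : u, K * 5 ^ finrank ℝ E * ∫⁻ y in ball x.1 (t x), ω y ∂ν :=
        ENNReal.tsum_le_tsum fun x =>
          hω.mul_setLIntegral_closedBall_le (ht x (hu x.2)) (hts x (hu x.2))
    _ = K * 5 ^ finrank ℝ E * ∫⁻ y in ⋃ x : u, ball x.1 (t x), ω y ∂ν := by
        rw [ENNReal.tsum_mul_left, lintegral_iUnion fun _ => measurableSet_ball]
        intro x y hxy
        exact (hdisj x.2 y.2 (Subtype.coe_injective.ne hxy)).mono ball_subset_closedBall
          ball_subset_closedBall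
    _ ≤ K * 5 ^ finrank ℝ E * ∫⁻ y, ω y ∂ν := by
        gcongr
        exact Measure.restrict_le_self

lemma SlowlyVarying.mul_setLIntegral_lt_localMaximal_le (hω : SlowlyVarying K ω)
    (ν : Measure E) (s : ℝ≥0∞) :
    s * ∫⁻ x in {x | s < localMaximal μ ν x}, ω x ∂μ ≤
      K * 5 ^ finrank ℝ E * ∫⁻ y, ω y ∂ν := by
  have hexhaust : {x | s < localMaximal μ ν x} =
      ⋃ N : ℕ, {x | s < localMaximal μ ν x} ∩ ball 0 N := by
    rw [← inter_iUnion, iUnion_ball_nat, inter_univ]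
  have hmono : Monotone fun N : ℕ => {x | s < localMaximal μ ν x} ∩ ball 0 N :=
    fun M N hMN => inter_subset_inter_right _ (ball_subset_ball (Nat.cast_le.2 hMN))
  rw [hexhaust, setLIntegral_iUnion_of_directed _ hmono.directed_le, ENNReal.mul_iSup]
  exact iSup_le fun N => hω.mul_setLIntegral_lt_localMaximal_inter_ball_le ν s N

lemma SlowlyVarying.mul_setLIntegral_two_mul_lt_localMaximal_le (hω : SlowlyVarying K ω)
    (hω_meas : Measurable ω) {G : E → ℝ≥0∞} (hG : AEMeasurable G μ) (s : ℝ≥0∞) :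
    s * ∫⁻ x in {x | 2 * s < localMaximal μ (μ.withDensity G) x}, ω x ∂μ ≤
      K * 5 ^ finrank ℝ E * ∫⁻ y, {y | s < G y}.indicator G y * ω y ∂μ := by
  have hG_ind : AEMeasurable ({y | s < G y}.indicator G) μ :=
    hG.indicator₀ (nullMeasurableSet_lt aemeasurable_const hG)
  have hdensity := lintegral_withDensity_eq_lintegral_mul₀ hG_ind hω_meas.aemeasurable
  simp only [Pi.mul_apply] at hdensity
  rw [← hdensity]
  have hsubset : {x | 2 * s < localMaximal μ (μ.withDensity G) x} ⊆
      {x | s < localMaximal μ (μ.withDensity ({y | s < G y}.indicator G)) x} :=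
    fun x hx => lt_localMaximal_withDensity_indicator hx
  exact (mul_le_mul_right (lintegral_mono_set hsubset) s).trans
    (hω.mul_setLIntegral_lt_localMaximal_le _ s)

end LocalMaximal

/-! ### Dyadic levels of the maximal function -/

section DyadicWeight

variable {E : Type*} [NormedAddCommGroup E]

/-- The density of `Ψ(x, t) / t` on the dyadic level `t ~ 2 ^ j`, damped on the region
`2 ^ j * (1 + ‖x‖) ^ m < 1` so that the contributions of the low levels `j < 0` are summable. -/
def dyadicWeight (m : ℕ) (j : ℤ) (x : E) : ℝ≥0∞ :=
  ENNReal.ofReal (min 1 ((2 : ℝ) ^ j * (1 + ‖x‖) ^ m) /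
    (Real.log (Real.exp 1 + 2 ^ j) + Real.log (Real.exp 1 + ‖x‖)))

/-- The sum, over the dyadic levels `2 ^ j` lying a factor `2` below `M x`, of `2 ^ j` weighted by
`dyadicWeight m j x`. -/
def dyadicMajorant (m : ℕ) (M : E → ℝ≥0∞) (x : E) : ℝ≥0∞ :=
  ∑' j : ℤ, {x | 2 * ENNReal.ofReal (2 ^ j) < M x}.indicator
    (fun x => ENNReal.ofReal (2 ^ j) * dyadicWeight m j x) x

lemma measurable_dyadicWeight [MeasurableSpace E] [OpensMeasurableSpace E] (m : ℕ) (j : ℤ) :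
    Measurable (dyadicWeight m j : E → ℝ≥0∞) := by
  unfold dyadicWeight
  fun_prop

lemma slowlyVarying_dyadicWeight (m : ℕ) (j : ℤ) :
    SlowlyVarying (2 ^ (m + 1)) (dyadicWeight m j : E → ℝ≥0∞) := by
  intro z y hzy hyz
  have hnum : min 1 ((2 : ℝ) ^ j * (1 + ‖z‖) ^ m) ≤ 2 ^ m * min 1 (2 ^ j * (1 + ‖y‖) ^ m) := by
    rw [mul_min_of_nonneg _ _ (by positivity)]
    refine min_le_min (by simpa using one_le_pow₀ one_le_two) ?_
    calc (2 : ℝ) ^ j * (1 + ‖z‖) ^ m ≤ 2 ^ j * (2 * (1 + ‖y‖)) ^ m := by gcongr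
      _ = 2 ^ m * (2 ^ j * (1 + ‖y‖) ^ m) := by rw [mul_pow]; ring
  have hlog := log_exp_one_add_le_two_mul (norm_nonneg y) (norm_nonneg z) hyz
  have hj : 1 ≤ Real.log (Real.exp 1 + 2 ^ j) := one_le_log_exp_one_add (by positivity)
  have hy := one_le_log_exp_one_add (norm_nonneg y)
  have hz := one_le_log_exp_one_add (norm_nonneg z)
  have hcoe : ((2 ^ (m + 1) : ℝ≥0) : ℝ≥0∞) = ENNReal.ofReal (2 ^ (m + 1)) := by
    rw [ENNReal.ofReal_pow zero_le_two, ENNReal.ofReal_ofNat]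
    norm_cast
  rw [dyadicWeight, dyadicWeight, hcoe, ← ENNReal.ofReal_mul (by positivity)]
  refine ENNReal.ofReal_le_ofReal ?_
  rw [div_le_iff₀ (by positivity)]
  refine hnum.trans ?_
  rw [mul_div_assoc', div_mul_eq_mul_div, le_div_iff₀ (by positivity)]
  calc 2 ^ m * min 1 ((2 : ℝ) ^ j * (1 + ‖y‖) ^ m) *
        (Real.log (Real.exp 1 + 2 ^ j) + Real.log (Real.exp 1 + ‖y‖))
      ≤ 2 ^ m * min 1 ((2 : ℝ) ^ j * (1 + ‖y‖) ^ m) *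
        (2 * (Real.log (Real.exp 1 + 2 ^ j) + Real.log (Real.exp 1 + ‖z‖))) := by
        gcongr
        linarith
    _ = _ := by ring

lemma indicator_dyadicWeight_natCast_le (m k : ℕ) (v : ℝ) (y : E) :
    {j : ℤ | (2 : ℝ) ^ j < v}.indicator (dyadicWeight m · y) k ≤
      ENNReal.ofReal 3 * ENNReal.ofReal (min 1 (v / 2 ^ k) / (k + 1)) := by
  by_cases hk : (2 : ℝ) ^ (k : ℤ) < v
  · rw [indicator_of_mem (show (k : ℤ) ∈ {j : ℤ | (2 : ℝ) ^ j < v} from hk), dyadicWeight,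
      ← ENNReal.ofReal_mul zero_le_three, zpow_natCast]
    rw [zpow_natCast] at hk
    have hlog : ((k : ℝ) + 1) / 3 ≤ Real.log (Real.exp 1 + 2 ^ k) :=
      succ_div_three_le_log (by positivity) (by linarith)
    have hy := one_le_log_exp_one_add (norm_nonneg y)
    refine ENNReal.ofReal_le_ofReal ?_
    rw [min_eq_left ((one_le_div (by positivity)).2 hk.le)]
    calc min 1 ((2 : ℝ) ^ k * (1 + ‖y‖) ^ m) /
          (Real.log (Real.exp 1 + 2 ^ k) + Real.log (Real.exp 1 + ‖y‖))
        ≤ 1 / ((k + 1) / 3) := by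
          gcongr
          · exact min_le_left _ _
          · linarith
      _ = 3 * (1 / (k + 1)) := by field_simp
  · rw [indicator_of_notMem (show (k : ℤ) ∉ {j : ℤ | (2 : ℝ) ^ j < v} from hk)]
    exact zero_le

lemma dyadicWeight_neg_succ_le (m k : ℕ) (y : E) :
    dyadicWeight m (-(k + 1 : ℤ)) y ≤ ENNReal.ofReal (Real.log (Real.exp 1 + ‖y‖))⁻¹ *
      ENNReal.ofReal (min 1 ((1 + ‖y‖) ^ m / 2 ^ k)) := by
  have hy := one_le_log_exp_one_add (norm_nonneg y)
  have hj : 1 ≤ Real.log (Real.exp 1 + 2 ^ (-(k + 1 : ℤ))) :=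
    one_le_log_exp_one_add (by positivity)
  have hpow : (2 : ℝ) ^ (-(k + 1 : ℤ)) ≤ (2 ^ k)⁻¹ := by
    rw [← zpow_natCast, ← zpow_neg]
    exact zpow_le_zpow_right₀ one_le_two (by omega)
  rw [dyadicWeight, ← ENNReal.ofReal_mul (by positivity), inv_mul_eq_div]
  gcongr
  · rw [div_eq_inv_mul]
    gcongr
  · linarith

lemma tsum_indicator_dyadicWeight_natCast_le (m : ℕ) {v : ℝ} (hv : 0 ≤ v) (y : E) :
    ∑' k : ℕ, {j : ℤ | (2 : ℝ) ^ j < v}.indicator (dyadicWeight m · y) k ≤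
      ENNReal.ofReal (15 * (1 + logLog v)) := by
  calc ∑' k : ℕ, {j : ℤ | (2 : ℝ) ^ j < v}.indicator (dyadicWeight m · y) k
      ≤ ENNReal.ofReal 3 * ∑' k : ℕ, ENNReal.ofReal (min 1 (v / 2 ^ k) / (k + 1)) := by
        rw [← ENNReal.tsum_mul_left]
        exact ENNReal.tsum_le_tsum fun k => indicator_dyadicWeight_natCast_le m k v y
    _ ≤ ENNReal.ofReal 3 * ENNReal.ofReal (5 * (1 + logLog v)) := by
        gcongr
        exact tsum_min_one_div_two_pow_div_succ_le hv
    _ = ENNReal.ofReal (15 * (1 + logLog v)) := by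
        rw [← ENNReal.ofReal_mul zero_le_three]
        ring_nf

lemma tsum_dyadicWeight_neg_succ_le (m : ℕ) (y : E) :
    ∑' k : ℕ, dyadicWeight m (-(k + 1 : ℤ)) y ≤ ENNReal.ofReal (5 * (m + 2)) := by
  have hy := one_le_log_exp_one_add (norm_nonneg y)
  calc ∑' k : ℕ, dyadicWeight m (-(k + 1 : ℤ)) y
      ≤ ENNReal.ofReal (Real.log (Real.exp 1 + ‖y‖))⁻¹ *
          ∑' k : ℕ, ENNReal.ofReal (min 1 ((1 + ‖y‖) ^ m / 2 ^ k)) := by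
        rw [← ENNReal.tsum_mul_left]
        exact ENNReal.tsum_le_tsum fun k => dyadicWeight_neg_succ_le m k y
    _ ≤ ENNReal.ofReal (Real.log (Real.exp 1 + ‖y‖))⁻¹ *
          ENNReal.ofReal (5 * ((m + 2) * Real.log (Real.exp 1 + ‖y‖))) := by
        gcongr
        refine (tsum_min_one_div_two_pow_le (by positivity)).trans ?_
        gcongr
        exact log_exp_one_add_one_add_pow_le m (norm_nonneg y)
    _ = ENNReal.ofReal (5 * (m + 2)) := by
        rw [← ENNReal.ofReal_mul (by positivity)]
        field_simp

lemma tsum_indicator_dyadicWeight_le (m : ℕ) {v : ℝ} (hv : 0 ≤ v) (y : E) :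
    ∑' j : ℤ, {j : ℤ | (2 : ℝ) ^ j < v}.indicator (dyadicWeight m · y) j ≤
      ENNReal.ofReal ((5 * m + 25) * (1 + logLog v)) := by
  have hv_log := logLog_nonneg v
  rw [tsum_of_nat_of_neg_add_one ENNReal.summable ENNReal.summable]
  have hlow : ∑' k : ℕ, {j : ℤ | (2 : ℝ) ^ j < v}.indicator (dyadicWeight m · y) (-(k + 1 : ℤ)) ≤
      ENNReal.ofReal (5 * (m + 2)) :=
    (ENNReal.tsum_le_tsum fun _ => indicator_le_self _ (dyadicWeight m · y) _).trans
      (tsum_dyadicWeight_neg_succ_le m y)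
  refine (add_le_add (tsum_indicator_dyadicWeight_natCast_le m hv y) hlow).trans ?_
  rw [← ENNReal.ofReal_add (by positivity) (by positivity)]
  gcongr
  nlinarith [mul_nonneg (m.cast_nonneg (α := ℝ)) hv_log]

variable [NormedSpace ℝ E] [FiniteDimensional ℝ E] [MeasurableSpace E] [BorelSpace E]
  {μ : Measure E} [μ.IsAddHaarMeasure]

lemma measurable_dyadicMajorant_localMaximal (m : ℕ) (ν : Measure E) :
    Measurable (dyadicMajorant m (localMaximal μ ν)) :=
  Measurable.tsum fun j => ((measurable_dyadicWeight m j).const_mul _).indicator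
    (isOpen_lt_localMaximal μ ν _).measurableSet

lemma lintegral_dyadicMajorant_localMaximal_le (m : ℕ) {g : E → ℝ}
    (hg : AEStronglyMeasurable g μ) :
    ∫⁻ x, dyadicMajorant m (localMaximal μ (μ.withDensity fun y => ‖g y‖ₑ)) x ∂μ ≤
      2 ^ (m + 1) * 5 ^ finrank ℝ E *
        ∫⁻ y, ‖g y‖ₑ * ENNReal.ofReal ((5 * m + 25) * (1 + logLog |g y|)) ∂μ := by
  have hlevel (j : ℤ) : MeasurableSet {x | 2 * ENNReal.ofReal (2 ^ j) <
      localMaximal μ (μ.withDensity fun y => ‖g y‖ₑ) x} :=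
    (isOpen_lt_localMaximal μ _ _).measurableSet
  have hweight (j : ℤ) := measurable_dyadicWeight (E := E) m j
  have hlt (j : ℤ) (y : E) : ENNReal.ofReal (2 ^ j) < ‖g y‖ₑ ↔ (2 : ℝ) ^ j < |g y| := by
    rw [Real.enorm_eq_ofReal_abs, ENNReal.ofReal_lt_ofReal_iff_of_nonneg (by positivity)]
  have hmeas (j : ℤ) : AEMeasurable (fun y => {y | ENNReal.ofReal (2 ^ j) < ‖g y‖ₑ}.indicator
      (fun y => ‖g y‖ₑ) y * dyadicWeight m j y) μ :=
    (hg.enorm.indicator₀ (nullMeasurableSet_lt aemeasurable_const hg.enorm)).mul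
      (hweight j).aemeasurable
  calc ∫⁻ x, dyadicMajorant m (localMaximal μ (μ.withDensity fun y => ‖g y‖ₑ)) x ∂μ
      = ∑' j : ℤ, ENNReal.ofReal (2 ^ j) * ∫⁻ x in {x | 2 * ENNReal.ofReal (2 ^ j) <
          localMaximal μ (μ.withDensity fun y => ‖g y‖ₑ) x}, dyadicWeight m j x ∂μ := by
        simp only [dyadicMajorant]
        rw [lintegral_tsum fun j => (((hweight j).const_mul _).indicator (hlevel j)).aemeasurable]
        simp only [lintegral_indicator (hlevel _), lintegral_const_mul _ (hweight _)]
    _ ≤ ∑' j : ℤ, 2 ^ (m + 1) * 5 ^ finrank ℝ E *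
          ∫⁻ y, {y | ENNReal.ofReal (2 ^ j) < ‖g y‖ₑ}.indicator (fun y => ‖g y‖ₑ) y *
            dyadicWeight m j y ∂μ := by
        refine ENNReal.tsum_le_tsum fun j => ?_
        simpa using (slowlyVarying_dyadicWeight m j).mul_setLIntegral_two_mul_lt_localMaximal_le
          (hweight j) hg.enorm (ENNReal.ofReal (2 ^ j))
    _ = 2 ^ (m + 1) * 5 ^ finrank ℝ E * ∫⁻ y, ‖g y‖ₑ *
          ∑' j : ℤ, {j : ℤ | (2 : ℝ) ^ j < |g y|}.indicator (dyadicWeight m · y) j ∂μ := by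
        rw [ENNReal.tsum_mul_left, ← lintegral_tsum hmeas]
        simp only [← ENNReal.tsum_mul_left, indicator_apply, mem_ofPred_eq, hlt, ite_mul, mul_ite,
          zero_mul, mul_zero]
    _ ≤ _ := by
        gcongr with y
        exact tsum_indicator_dyadicWeight_le m (abs_nonneg _) y

end DyadicWeight

/-! ### The far part -/

section FarKernel

variable {E : Type*} [NormedAddCommGroup E] [NormedSpace ℝ E]

/-- The size of `φ_t (x - y) - φ_t x` for radii `t` comparable to `1 + ‖x‖` or larger: the factor
`min 1 (‖y‖ / (1 + ‖x‖))` is the gain due to cancellation. -/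
def farKernel (x y : E) : ℝ≥0∞ :=
  ENNReal.ofReal (min 1 (‖y‖ / (1 + ‖x‖)) / (1 + ‖x‖) ^ finrank ℝ E)

lemma farKernel_div_log_le_tsum (x y : E) :
    farKernel x y / ENNReal.ofReal (Real.log (Real.exp 1 + ‖x‖)) ≤
      ∑' k : ℕ, (closedBall (0 : E) (2 ^ (k + 1))).indicator (fun _ =>
        ENNReal.ofReal (3 * (min 1 (‖y‖ / 2 ^ k) / (k + 1)) / (2 ^ k) ^ finrank ℝ E)) x := by
  have hx := one_le_log_exp_one_add (norm_nonneg x)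
  obtain ⟨k, hk, hk_succ⟩ := exists_nat_pow_near (x := 1 + ‖x‖) (y := 2)
    (by linarith [norm_nonneg x]) one_lt_two
  refine le_trans ?_ (ENNReal.le_tsum k)
  rw [indicator_of_mem (by rw [mem_closedBall_zero_iff]; linarith), farKernel,
    ← ENNReal.ofReal_div_of_pos (by positivity)]
  have hlog := succ_div_three_le_log (norm_nonneg x) hk
  refine ENNReal.ofReal_le_ofReal ?_
  calc min 1 (‖y‖ / (1 + ‖x‖)) / (1 + ‖x‖) ^ finrank ℝ E / Real.log (Real.exp 1 + ‖x‖)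
      ≤ min 1 (‖y‖ / 2 ^ k) / (2 ^ k) ^ finrank ℝ E / ((k + 1) / 3) := by gcongr
    _ = 3 * (min 1 (‖y‖ / 2 ^ k) / (k + 1)) / (2 ^ k) ^ finrank ℝ E := by field_simp

variable [MeasurableSpace E]

/-- The potential of `|g|` with respect to `farKernel`. -/
def farPotential (μ : Measure E) (g : E → ℝ) (x : E) : ℝ≥0∞ :=
  ∫⁻ y, ‖g y‖ₑ * farKernel x y ∂μ

variable [FiniteDimensional ℝ E] [BorelSpace E] (μ : Measure E) [μ.IsAddHaarMeasure]

lemma lintegral_farKernel_div_log_le (y : E) :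
    ∫⁻ x, farKernel x y / ENNReal.ofReal (Real.log (Real.exp 1 + ‖x‖)) ∂μ ≤
      μ (ball 0 1) * ENNReal.ofReal (15 * 2 ^ finrank ℝ E * (1 + logLog ‖y‖)) := by
  calc ∫⁻ x, farKernel x y / ENNReal.ofReal (Real.log (Real.exp 1 + ‖x‖)) ∂μ
      ≤ ∫⁻ x, ∑' k : ℕ, (closedBall (0 : E) (2 ^ (k + 1))).indicator (fun _ =>
          ENNReal.ofReal (3 * (min 1 (‖y‖ / 2 ^ k) / (k + 1)) / (2 ^ k) ^ finrank ℝ E)) x ∂μ :=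
        lintegral_mono fun x => farKernel_div_log_le_tsum x y
    _ = ∑' k : ℕ, μ (ball 0 1) * ENNReal.ofReal (3 * 2 ^ finrank ℝ E) *
          ENNReal.ofReal (min 1 (‖y‖ / 2 ^ k) / (k + 1)) := by
        rw [lintegral_tsum fun k =>
          (measurable_const.indicator measurableSet_closedBall).aemeasurable]
        refine tsum_congr fun k => ?_
        rw [lintegral_indicator_const measurableSet_closedBall,
          Measure.addHaar_closedBall _ _ (by positivity), ← mul_assoc, mul_comm,
          ← ENNReal.ofReal_mul (by positivity), mul_assoc, ← ENNReal.ofReal_mul (by positivity)]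
        congr 2
        field_simp
        ring
    _ ≤ μ (ball 0 1) * ENNReal.ofReal (3 * 2 ^ finrank ℝ E) *
          ENNReal.ofReal (5 * (1 + logLog ‖y‖)) := by
        rw [ENNReal.tsum_mul_left]
        gcongr
        exact tsum_min_one_div_two_pow_div_succ_le (norm_nonneg y)
    _ = _ := by
        rw [mul_assoc, ← ENNReal.ofReal_mul (by positivity)]
        ring_nf

variable {μ}

lemma lintegral_farPotential_div_log_le {g : E → ℝ} (hg : AEStronglyMeasurable g μ) :
    ∫⁻ x, farPotential μ g x / ENNReal.ofReal (Real.log (Real.exp 1 + ‖x‖)) ∂μ ≤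
      μ (ball 0 1) *
        ∫⁻ y, ‖g y‖ₑ * ENNReal.ofReal (15 * 2 ^ finrank ℝ E * (1 + logLog ‖y‖)) ∂μ := by
  have hmeas : Measurable fun p : E × E =>
      farKernel p.1 p.2 / ENNReal.ofReal (Real.log (Real.exp 1 + ‖p.1‖)) := by
    unfold farKernel
    fun_prop
  calc ∫⁻ x, farPotential μ g x / ENNReal.ofReal (Real.log (Real.exp 1 + ‖x‖)) ∂μ
      = ∫⁻ x, ∫⁻ y, ‖g y‖ₑ *
          (farKernel x y / ENNReal.ofReal (Real.log (Real.exp 1 + ‖x‖))) ∂μ ∂μ := by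
        refine lintegral_congr fun x => ?_
        simp only [farPotential, div_eq_mul_inv, ← mul_assoc]
        refine (lintegral_mul_const' _ _ (ENNReal.inv_ne_top.2 ?_)).symm
        have hx := one_le_log_exp_one_add (norm_nonneg x)
        exact (ENNReal.ofReal_pos.2 (by linarith)).ne'
    _ = ∫⁻ y, ‖g y‖ₑ * ∫⁻ x,
          farKernel x y / ENNReal.ofReal (Real.log (Real.exp 1 + ‖x‖)) ∂μ ∂μ := by
        rw [lintegral_lintegral_swap (hg.enorm.comp_snd.mul hmeas.aemeasurable)]
        refine lintegral_congr fun y => lintegral_const_mul' _ _ enorm_ne_top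
    _ ≤ ∫⁻ y, ‖g y‖ₑ *
          (μ (ball 0 1) * ENNReal.ofReal (15 * 2 ^ finrank ℝ E * (1 + logLog ‖y‖))) ∂μ := by
        gcongr with y
        exact lintegral_farKernel_div_log_le μ y
    _ = _ := by
        rw [← lintegral_const_mul' _ _ measure_ball_lt_top.ne]
        simp only [mul_left_comm]

end FarKernel

/-! ### Pointwise control of `𝓜_φ g` -/

lemma support_subset_ball_of_subset_closedBall {E : Type*} [NormedAddCommGroup E]
    [NormedSpace ℝ E] {φ : E → ℝ} {r : ℝ} (hφ : Continuous φ) (hr : r ≠ 0)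
    (hsupp : Function.support φ ⊆ closedBall 0 r) : Function.support φ ⊆ ball 0 r := by
  rw [← interior_closedBall 0 hr]
  exact interior_maximal hsupp hφ.isOpen_support

lemma ofReal_iSup_abs_le {ι : Sort*} {u : ι → ℝ} {B : ℝ≥0∞} (h : ∀ i, ‖u i‖ₑ ≤ B) :
    ENNReal.ofReal (⨆ i, |u i|) ≤ B := by
  rcases eq_or_ne B ⊤ with rfl | hB
  · exact le_top
  · refine ENNReal.ofReal_le_of_le_toReal (Real.iSup_le (fun i => ?_) ENNReal.toReal_nonneg)
    rw [← Real.norm_eq_abs, ← toReal_enorm]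
    exact ENNReal.toReal_mono hB (h i)

section PhiConv

variable {n : ℕ} {φ g : En n → ℝ} {C : ℝ}

lemma enorm_phiConv_le_setLIntegral (hC : ∀ z, |φ z| ≤ C)
    (hsupp : Function.support φ ⊆ ball 0 1) {t : ℝ} (ht : 0 < t) (x : En n) :
    ‖phiConv n φ g t x‖ₑ ≤ ENNReal.ofReal (C / t ^ n) * ∫⁻ y in ball x t, ‖g y‖ₑ := by
  rw [← lintegral_const_mul' _ _ ENNReal.ofReal_ne_top, ← lintegral_indicator measurableSet_ball]
  refine (enorm_integral_le_lintegral_enorm _).trans (lintegral_mono fun y => ?_)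
  by_cases hy : y ∈ ball x t
  · rw [indicator_of_mem hy, enorm_mul, enorm_mul]
    gcongr
    rw [← enorm_mul, Real.enorm_eq_ofReal_abs, abs_mul, abs_of_pos (by positivity), div_eq_inv_mul]
    gcongr
    exact hC _
  · have hφ : φ (t⁻¹ • (x - y)) = 0 := by
      refine Function.notMem_support.1 fun hz => hy ?_
      have := hsupp hz
      rwa [mem_ball_zero_iff, norm_smul, norm_inv, Real.norm_of_nonneg ht.le,
        inv_mul_lt_iff₀ ht, mul_one, ← dist_eq_norm, dist_comm, ← mem_ball] at this
    simp [hφ]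

lemma enorm_phiConv_le_localMaximal (hC : ∀ z, |φ z| ≤ C)
    (hsupp : Function.support φ ⊆ ball 0 1) {t : ℝ} {x : En n}
    (ht : t ∈ Ioo 0 ((1 + ‖x‖) / 16)) :
    ‖phiConv n φ g t x‖ₑ ≤ ENNReal.ofReal C * volume (ball (0 : En n) 1) *
      localMaximal volume (volume.withDensity fun y => ‖g y‖ₑ) x := by
  have ht_pos := ht.1
  have hvol : volume (ball x t) = ENNReal.ofReal (t ^ n) * volume (ball (0 : En n) 1) := by
    rw [Measure.addHaar_ball_of_pos _ _ ht_pos, finrank_euclideanSpace, Fintype.card_fin]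
  have hunit_pos : volume (ball (0 : En n) 1) ≠ 0 := (measure_ball_pos _ _ one_pos).ne'
  calc ‖phiConv n φ g t x‖ₑ
      ≤ ENNReal.ofReal (C / t ^ n) * ∫⁻ y in ball x t, ‖g y‖ₑ :=
        enorm_phiConv_le_setLIntegral hC hsupp ht_pos x
    _ = ENNReal.ofReal C * volume (ball (0 : En n) 1) *
          ((∫⁻ y in ball x t, ‖g y‖ₑ) / volume (ball x t)) := by
        rw [hvol, ENNReal.ofReal_div_of_pos (by positivity), div_eq_mul_inv, div_eq_mul_inv,
          ENNReal.mul_inv (Or.inr measure_ball_lt_top.ne) (Or.inl ENNReal.ofReal_ne_top)]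
        calc _ = ENNReal.ofReal C * (ENNReal.ofReal (t ^ n))⁻¹ * (∫⁻ y in ball x t, ‖g y‖ₑ) *
              1 := by rw [mul_one]
          _ = _ := by
            rw [← ENNReal.mul_inv_cancel hunit_pos measure_ball_lt_top.ne]
            ring
    _ ≤ _ := by
        rw [← withDensity_apply _ measurableSet_ball]
        gcongr
        exact le_iSup₂_of_le t ht le_rfl

lemma phiConv_eq_integral_sub (hφ : Continuous φ) (hC : ∀ z, |φ z| ≤ C) (hg : Integrable g)
    (hg_zero : ∫ y, g y = 0) (t : ℝ) (x : En n) :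
    phiConv n φ g t x = ∫ y, (t ^ n)⁻¹ * (φ (t⁻¹ • (x - y)) - φ (t⁻¹ • x)) * g y := by
  have hint : Integrable fun y => (t ^ n)⁻¹ * φ (t⁻¹ • (x - y)) * g y := by
    refine hg.bdd_mul (c := |(t ^ n)⁻¹| * C) (by fun_prop) (.of_forall fun y => ?_)
    rw [norm_mul, Real.norm_eq_abs, Real.norm_eq_abs]
    gcongr
    exact hC _
  simp only [mul_sub, sub_mul]
  rw [integral_sub hint (hg.const_mul _), integral_const_mul, hg_zero, mul_zero, sub_zero, phiConv]

lemma abs_dilate_sub_dilate_le_mul_min {L : ℝ≥0} (hC : ∀ z, |φ z| ≤ C) (hL : LipschitzWith L φ)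
    {t : ℝ} {x : En n} (ht : (1 + ‖x‖) / 16 ≤ t) (y : En n) :
    |φ (t⁻¹ • (x - y)) - φ (t⁻¹ • x)| ≤ (2 * C + 16 * L) * min 1 (‖y‖ / (1 + ‖x‖)) := by
  have ht_pos : 0 < t := lt_of_lt_of_le (by positivity) ht
  have hC_nonneg : 0 ≤ C := (abs_nonneg _).trans (hC 0)
  rw [mul_min_of_nonneg _ _ (by positivity), mul_one]
  refine le_min ?_ ?_
  · calc |φ (t⁻¹ • (x - y)) - φ (t⁻¹ • x)| ≤ C + C :=
          (abs_sub _ _).trans (add_le_add (hC _) (hC _))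
      _ ≤ 2 * C + 16 * L := by linarith [L.coe_nonneg]
  · calc |φ (t⁻¹ • (x - y)) - φ (t⁻¹ • x)| ≤ L * (t⁻¹ * ‖y‖) := by
          have h := hL.dist_le_mul (t⁻¹ • (x - y)) (t⁻¹ • x)
          rwa [Real.dist_eq, dist_eq_norm, ← smul_sub, sub_sub_cancel_left, norm_smul, norm_neg,
            Real.norm_of_nonneg (by positivity)] at h
      _ ≤ L * (((1 + ‖x‖) / 16)⁻¹ * ‖y‖) := by gcongr
      _ = 16 * L * (‖y‖ / (1 + ‖x‖)) := by field_simp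
      _ ≤ (2 * C + 16 * L) * (‖y‖ / (1 + ‖x‖)) := by gcongr; linarith

lemma enorm_phiConv_le_farPotential {L : ℝ≥0} (hC : ∀ z, |φ z| ≤ C) (hL : LipschitzWith L φ)
    (hg : Integrable g) (hg_zero : ∫ y, g y = 0) {t : ℝ} {x : En n} (ht : (1 + ‖x‖) / 16 ≤ t) :
    ‖phiConv n φ g t x‖ₑ ≤
      ENNReal.ofReal (16 ^ n * (2 * C + 16 * L)) * farPotential volume g x := by
  have ht_pos : 0 < t := lt_of_lt_of_le (by positivity) ht
  have hC_nonneg : 0 ≤ C := (abs_nonneg _).trans (hC 0)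
  rw [phiConv_eq_integral_sub hL.continuous hC hg hg_zero, farPotential,
    ← lintegral_const_mul' _ _ ENNReal.ofReal_ne_top]
  refine (enorm_integral_le_lintegral_enorm _).trans (lintegral_mono fun y => ?_)
  rw [enorm_mul, mul_left_comm, mul_comm]
  gcongr
  rw [farKernel, finrank_euclideanSpace, Fintype.card_fin, Real.enorm_eq_ofReal_abs,
    ← ENNReal.ofReal_mul (by positivity), abs_mul, abs_of_pos (by positivity)]
  refine ENNReal.ofReal_le_ofReal ?_
  calc (t ^ n)⁻¹ * |φ (t⁻¹ • (x - y)) - φ (t⁻¹ • x)|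
      ≤ (((1 + ‖x‖) / 16) ^ n)⁻¹ * ((2 * C + 16 * L) * min 1 (‖y‖ / (1 + ‖x‖))) := by
        gcongr
        exact abs_dilate_sub_dilate_le_mul_min hC hL ht y
    _ = _ := by rw [div_pow]; field_simp

lemma exists_forall_ofReal_Mphi_le {L : ℝ≥0} (hL : LipschitzWith L φ)
    (hsupp : Function.support φ ⊆ closedBall 0 1) (hg : Integrable g) (hg_zero : ∫ y, g y = 0) :
    ∃ C : ℝ, 1 ≤ C ∧ ∀ x, ENNReal.ofReal (Mphi n φ g x) ≤ ENNReal.ofReal C *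
      max (localMaximal volume (volume.withDensity fun y => ‖g y‖ₑ) x)
        (farPotential volume g x) := by
  obtain ⟨C, hC⟩ := hL.continuous.bounded_above_of_compact_support
    (HasCompactSupport.intro (isCompact_closedBall 0 1) fun x hx =>
      Function.notMem_support.1 fun h => hx (hsupp h))
  have hsupp' := support_subset_ball_of_subset_closedBall hL.continuous one_ne_zero hsupp
  set V := (volume (ball (0 : En n) 1)).toReal
  have hV : volume (ball (0 : En n) 1) = ENNReal.ofReal V :=
    (ENNReal.ofReal_toReal measure_ball_lt_top.ne).symm
  set C' := max 1 (max (C * V) (16 ^ n * (2 * C + 16 * L)))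
  refine ⟨C', le_max_left _ _, fun x => ofReal_iSup_abs_le fun ⟨t, ht⟩ => ?_⟩
  rcases lt_or_ge t ((1 + ‖x‖) / 16) with hsmall | hlarge
  · refine (enorm_phiConv_le_localMaximal hC hsupp' ⟨ht, hsmall⟩).trans ?_
    rw [hV, ← ENNReal.ofReal_mul ((norm_nonneg _).trans (hC 0))]
    gcongr
    · exact (le_max_left _ _).trans (le_max_right _ _)
    · exact le_max_left _ _
  · refine (enorm_phiConv_le_farPotential hC hL hg hg_zero hlarge).trans ?_
    gcongr
    · exact (le_max_right _ _).trans (le_max_right _ _)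
    · exact le_max_right _ _

end PhiConv

/-! ### The `log log` energy -/

section LogLogEnergy

lemma measurable_logLog : Measurable logLog := by
  unfold logLog lnp
  fun_prop

lemma mul_one_add_logLog_add_le {a b c r : ℝ} (ha : 0 ≤ a) (hb : 0 ≤ b) (hc : 1 ≤ c)
    (hab : a ≤ c * b) :
    a * (1 + logLog a + logLog r) ≤ c ^ 2 * (b * (1 + logLog b + logLog r)) := by
  have hr := logLog_nonneg r
  have hlog : 1 + logLog a ≤ c * (1 + logLog b) :=
    (add_le_add_right (monotoneOn_logLog ha (ha.trans hab) hab) 1).trans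
      (one_add_logLog_mul_le hc hb)
  calc a * (1 + logLog a + logLog r)
      ≤ c * b * (c * (1 + logLog b) + c * logLog r) := by
        have := logLog_nonneg a
        gcongr
        exact le_mul_of_one_le_left hr hc
    _ = c ^ 2 * (b * (1 + logLog b + logLog r)) := by ring

lemma abs_sub_mul_mul_one_add_logLog_add_le (u v c r : ℝ) :
    |u - c * v| * (1 + logLog |u - c * v| + logLog r) ≤ (1 + |c|) ^ 2 *
      (|u| * (1 + logLog |u| + logLog r) + |v| * (1 + logLog |v| + logLog r)) := by
  have hpos (w : ℝ) : 0 ≤ |w| * (1 + logLog |w| + logLog r) :=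
    mul_nonneg (abs_nonneg w) (by linarith [logLog_nonneg |w|, logLog_nonneg r])
  have hle (w : ℝ) (huw : |u| ≤ |w|) (hvw : |v| ≤ |w|) :
      |u - c * v| * (1 + logLog |u - c * v| + logLog r) ≤
        (1 + |c|) ^ 2 * (|w| * (1 + logLog |w| + logLog r)) := by
    refine mul_one_add_logLog_add_le (abs_nonneg _) (abs_nonneg _) (by simp) ?_
    calc |u - c * v| ≤ |u| + |c| * |v| := (abs_sub _ _).trans_eq (by rw [abs_mul])
      _ ≤ |w| + |c| * |w| := by gcongr
      _ = (1 + |c|) * |w| := by ring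
  rcases le_total |u| |v| with h | h
  · refine (hle v h le_rfl).trans ?_
    gcongr
    exact le_add_of_nonneg_left (hpos u)
  · refine (hle u le_rfl h).trans ?_
    gcongr
    exact le_add_of_nonneg_right (hpos v)

variable {E : Type*} [NormedAddCommGroup E] [MeasurableSpace E] {μ : Measure E} {f θ : E → ℝ}

/-- The integral `∫ |f x| (1 + ln₊ ln (e + |f x|) + ln₊ ln (e + ‖x‖)) dμ`. -/
def logLogEnergy (μ : Measure E) (f : E → ℝ) : ℝ≥0∞ :=
  ∫⁻ x, ENNReal.ofReal (|f x| * (1 + logLog |f x| + logLog ‖x‖)) ∂μ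

lemma lintegral_enorm_mul_ofReal_lt_top {w : E → ℝ} {A : ℝ} (hA : 0 ≤ A)
    (hw : ∀ x, w x ≤ 1 + logLog |f x| + logLog ‖x‖) (hf : logLogEnergy μ f < ⊤) :
    ∫⁻ x, ‖f x‖ₑ * ENNReal.ofReal (A * w x) ∂μ < ⊤ := by
  refine lt_of_le_of_lt ?_ (ENNReal.mul_lt_top (ENNReal.ofReal_lt_top (r := A)) hf)
  rw [logLogEnergy, ← lintegral_const_mul' _ _ ENNReal.ofReal_ne_top]
  refine lintegral_mono fun x => ?_
  rw [Real.enorm_eq_ofReal_abs, ← ENNReal.ofReal_mul (abs_nonneg _), ← ENNReal.ofReal_mul hA,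
    mul_left_comm]
  gcongr
  exact hw x

lemma logLogEnergy_lt_top_of_bounded [BorelSpace E] [ProperSpace E] [IsFiniteMeasureOnCompacts μ]
    {C : ℝ} {s : Set E} (hs : Bornology.IsBounded s) (hsupp : ∀ x, x ∉ s → θ x = 0)
    (hC : ∀ x, |θ x| ≤ C) : logLogEnergy μ θ < ⊤ := by
  obtain ⟨R, hR⟩ := hs.subset_closedBall 0
  have hle : logLogEnergy μ θ ≤ ∫⁻ x, (closedBall 0 R).indicator
      (fun _ => ENNReal.ofReal (C * (1 + logLog C + logLog R))) x ∂μ := by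
    refine lintegral_mono fun x => ?_
    by_cases hx : x ∈ s
    · rw [indicator_of_mem (hR hx)]
      have hxR : ‖x‖ ≤ R := mem_closedBall_zero_iff.1 (hR hx)
      have hC_nonneg : 0 ≤ C := (abs_nonneg _).trans (hC x)
      have hC_log := monotoneOn_logLog (abs_nonneg (θ x)) hC_nonneg (hC x)
      have hR_log := monotoneOn_logLog (norm_nonneg x) ((norm_nonneg x).trans hxR) hxR
      have := logLog_nonneg |θ x|
      have := logLog_nonneg ‖x‖
      gcongr
      exact hC x
    · simp [hsupp x hx]
  refine hle.trans_lt ?_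
  rw [lintegral_indicator_const measurableSet_closedBall]
  exact ENNReal.mul_lt_top ENNReal.ofReal_lt_top measure_closedBall_lt_top

lemma logLogEnergy_sub_const_mul_lt_top [OpensMeasurableSpace E] (hf_meas : AEMeasurable f μ)
    (hf : logLogEnergy μ f < ⊤) (hθ : logLogEnergy μ θ < ⊤) (c : ℝ) :
    logLogEnergy μ (fun x => f x - c * θ x) < ⊤ := by
  have hmeas : AEMeasurable
      (fun x => ENNReal.ofReal (|f x| * (1 + logLog |f x| + logLog ‖x‖))) μ := by
    have habs : AEMeasurable (fun x => |f x|) μ := measurable_abs.comp_aemeasurable hf_meas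
    have hlog_abs : AEMeasurable (fun x => logLog |f x|) μ :=
      measurable_logLog.comp_aemeasurable habs
    have hlog_norm : Measurable fun x : E => logLog ‖x‖ := measurable_logLog.comp measurable_norm
    exact (habs.mul ((hlog_abs.const_add 1).add hlog_norm.aemeasurable)).ennreal_ofReal
  calc logLogEnergy μ (fun x => f x - c * θ x)
      ≤ ∫⁻ x, ENNReal.ofReal ((1 + |c|) ^ 2) *
          (ENNReal.ofReal (|f x| * (1 + logLog |f x| + logLog ‖x‖)) +
            ENNReal.ofReal (|θ x| * (1 + logLog |θ x| + logLog ‖x‖))) ∂μ := by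
        refine lintegral_mono fun x => (ENNReal.ofReal_le_ofReal
          (abs_sub_mul_mul_one_add_logLog_add_le _ _ _ _)).trans ?_
        rw [ENNReal.ofReal_mul (by positivity)]
        gcongr
        exact ENNReal.ofReal_add_le
    _ = ENNReal.ofReal ((1 + |c|) ^ 2) * (logLogEnergy μ f + logLogEnergy μ θ) := by
        rw [lintegral_const_mul' _ _ ENNReal.ofReal_ne_top, lintegral_add_left' hmeas]
        rfl
    _ < ⊤ := ENNReal.mul_lt_top ENNReal.ofReal_lt_top (ENNReal.add_lt_top.2 ⟨hf, hθ⟩)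

end LogLogEnergy

/-! ### Integrability of `Ψ(x, 𝓜_φ g(x))` -/

section Psi

variable {n : ℕ}

lemma Mphi_nonneg (φ g : En n → ℝ) (x : En n) : 0 ≤ Mphi n φ g x :=
  Real.iSup_nonneg fun _ => abs_nonneg _

lemma Psi_le_div_log {x : En n} {t : ℝ} (ht : 0 ≤ t) :
    Psi n x t ≤ t / Real.log (Real.exp 1 + ‖x‖) := by
  have hx := one_le_log_exp_one_add (norm_nonneg x)
  have ht_log := one_le_log_exp_one_add ht
  unfold Psi
  gcongr
  linarith

lemma ofReal_Psi_le_dyadicMajorant (m : ℕ) {M : En n → ℝ≥0∞} {C t : ℝ} {x : En n} (hC : 1 ≤ C)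
    (ht : 0 ≤ t) (htM : ENNReal.ofReal t ≤ ENNReal.ofReal C * M x) :
    ENNReal.ofReal (Psi n x t) ≤
      ENNReal.ofReal (4 * C) *
        (ENNReal.ofReal ((1 + ‖x‖) ^ m)⁻¹ + dyadicMajorant m M x) := by
  rcases ht.eq_or_lt with rfl | ht_pos
  · simp [Psi]
  obtain ⟨j, hj, hj_succ⟩ :=
    exists_mem_Ioc_zpow (x := t / (2 * C)) (y := 2) (by positivity) one_lt_two
  rw [lt_div_iff₀ (by positivity)] at hj
  rw [div_le_iff₀ (by positivity), zpow_add_one₀ two_ne_zero] at hj_succ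
  have hx := one_le_log_exp_one_add (norm_nonneg x)
  have ht_log := one_le_log_exp_one_add ht
  have h2j : (0 : ℝ) < 2 ^ j := by positivity
  have hj_log := one_le_log_exp_one_add h2j.le
  rcases lt_or_ge ((2 : ℝ) ^ j * (1 + ‖x‖) ^ m) 1 with hdamped | hmain
  · rw [mul_add, ← ENNReal.ofReal_mul (by positivity)]
    refine le_add_right (ENNReal.ofReal_le_ofReal ?_)
    calc Psi n x t ≤ t := div_le_self ht (by linarith)
      _ ≤ 4 * C * 2 ^ j := by linarith
      _ ≤ 4 * C * ((1 + ‖x‖) ^ m)⁻¹ := by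
        gcongr
        rw [← one_div, le_div_iff₀ (by positivity)]
        exact hdamped.le
  · have hlevel : 2 * ENNReal.ofReal (2 ^ j) < M x := by
      refine lt_of_mul_lt_mul_left' (a := ENNReal.ofReal C) (lt_of_lt_of_le ?_ htM)
      rw [← ENNReal.ofReal_ofNat, ← ENNReal.ofReal_mul zero_le_two,
        ← ENNReal.ofReal_mul (by positivity), ENNReal.ofReal_lt_ofReal_iff ht_pos]
      linarith
    have hterm : ENNReal.ofReal (2 ^ j) * dyadicWeight m j x ≤ dyadicMajorant m M x := by
      refine le_trans ?_ (ENNReal.le_tsum j)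
      rw [indicator_of_mem (show x ∈ {x | 2 * ENNReal.ofReal (2 ^ j) < M x} from hlevel)]
    refine le_trans ?_ (mul_le_mul_right (hterm.trans le_add_self) _)
    rw [dyadicWeight, min_eq_left hmain, ← ENNReal.ofReal_mul h2j.le,
      ← ENNReal.ofReal_mul (by positivity)]
    refine ENNReal.ofReal_le_ofReal ?_
    calc Psi n x t ≤ 4 * C * 2 ^ j /
          (Real.log (Real.exp 1 + 2 ^ j) + Real.log (Real.exp 1 + ‖x‖)) := by
          unfold Psi
          gcongr <;> nlinarith
      _ = _ := by ring

lemma ofReal_Psi_le_of_le_max (m : ℕ) {M : En n → ℝ≥0∞} {P : ℝ≥0∞} {C t : ℝ} {x : En n}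
    (hC : 1 ≤ C) (ht : 0 ≤ t) (htMP : ENNReal.ofReal t ≤ ENNReal.ofReal C * max (M x) P) :
    ENNReal.ofReal (Psi n x t) ≤
      ENNReal.ofReal (4 * C) * (ENNReal.ofReal ((1 + ‖x‖) ^ m)⁻¹ + dyadicMajorant m M x) +
        ENNReal.ofReal C * (P / ENNReal.ofReal (Real.log (Real.exp 1 + ‖x‖))) := by
  have hx := one_le_log_exp_one_add (norm_nonneg x)
  rcases le_total P (M x) with h | h
  · rw [max_eq_left h] at htMP
    exact le_add_right (ofReal_Psi_le_dyadicMajorant m hC ht htMP)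
  · rw [max_eq_right h] at htMP
    refine le_add_left ((ENNReal.ofReal_le_ofReal (Psi_le_div_log ht)).trans ?_)
    rw [ENNReal.ofReal_div_of_pos (by linarith), ← mul_div_assoc]
    gcongr

lemma lintegral_inv_one_add_norm_pow_lt_top :
    ∫⁻ x : En n, ENNReal.ofReal ((1 + ‖x‖) ^ (n + 1))⁻¹ < ⊤ := by
  have h := finite_integral_one_add_norm (μ := (volume : Measure (En n))) (r := (n + 1 : ℕ))
    (by simp)
  simpa only [Real.rpow_neg (add_nonneg zero_le_one (norm_nonneg _)), Real.rpow_natCast] using h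

theorem lintegral_Psi_Mphi_lt_top_of_integral_eq_zero {φ g : En n → ℝ} {L : ℝ≥0}
    (hφ : LipschitzWith L φ) (hφsupp : Function.support φ ⊆ closedBall 0 1) (hg : Integrable g)
    (hg_zero : ∫ x, g x = 0) (hg_energy : logLogEnergy volume g < ⊤) :
    ∫⁻ x, ENNReal.ofReal (Psi n x (Mphi n φ g x)) < ⊤ := by
  obtain ⟨C, hC, hMphi⟩ := exists_forall_ofReal_Mphi_le hφ hφsupp hg hg_zero
  set M : En n → ℝ≥0∞ := localMaximal volume (volume.withDensity fun y => ‖g y‖ₑ)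
  set near : En n → ℝ≥0∞ := fun x => ENNReal.ofReal (4 * C) *
    (ENNReal.ofReal ((1 + ‖x‖) ^ (n + 1))⁻¹ + dyadicMajorant (n + 1) M x)
  set far : En n → ℝ≥0∞ := fun x => ENNReal.ofReal C *
    (farPotential volume g x / ENNReal.ofReal (Real.log (Real.exp 1 + ‖x‖)))
  have hpointwise (x : En n) : ENNReal.ofReal (Psi n x (Mphi n φ g x)) ≤ near x + far x :=
    ofReal_Psi_le_of_le_max (n + 1) hC (Mphi_nonneg φ g x) (hMphi x)
  have hnear_meas : Measurable near := by
    have := measurable_dyadicMajorant_localMaximal (n + 1) (μ := volume)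
      (volume.withDensity fun y => ‖g y‖ₑ)
    fun_prop
  have hnear : ∫⁻ x, near x < ⊤ := by
    rw [lintegral_const_mul' _ _ ENNReal.ofReal_ne_top, lintegral_add_left (by fun_prop)]
    refine ENNReal.mul_lt_top ENNReal.ofReal_lt_top (ENNReal.add_lt_top.2
      ⟨lintegral_inv_one_add_norm_pow_lt_top, ?_⟩)
    refine (lintegral_dyadicMajorant_localMaximal_le (n + 1) hg.1).trans_lt
      (ENNReal.mul_lt_top ?_ (lintegral_enorm_mul_ofReal_lt_top (by positivity)
        (fun x => by linarith [logLog_nonneg ‖x‖]) hg_energy))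
    finiteness
  have hfar : ∫⁻ x, far x < ⊤ := by
    rw [lintegral_const_mul' _ _ ENNReal.ofReal_ne_top]
    refine ENNReal.mul_lt_top ENNReal.ofReal_lt_top
      ((lintegral_farPotential_div_log_le hg.1).trans_lt ?_)
    exact ENNReal.mul_lt_top measure_ball_lt_top
      (lintegral_enorm_mul_ofReal_lt_top (by positivity)
        (fun x => by linarith [logLog_nonneg |g x|]) hg_energy)
  refine (lintegral_mono hpointwise).trans_lt ?_
  rw [lintegral_add_left hnear_meas]
  exact ENNReal.add_lt_top.2 ⟨hnear, hfar⟩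

lemma IsTestFun.support_subset_s17 {φ : En n → ℝ} (hφ : IsTestFun n φ) :
    Function.support φ ⊆ closedBall 0 1 :=
  fun x hx => by_contra fun h => hx (hφ.2.1 x h)

lemma IsTestFun.exists_lipschitzWith_s17 {φ : En n → ℝ} (hφ : IsTestFun n φ) :
    ∃ L : ℝ≥0, LipschitzWith L φ :=
  ContDiff.lipschitzWith_of_hasCompactSupport
    (HasCompactSupport.intro (isCompact_closedBall 0 1) hφ.2.1) hφ.1 (by simp)

lemma isBounded_unitQ : Bornology.IsBounded (unitQ n) := by
  have hbox : Bornology.IsBounded (pi univ fun _ : Fin n => Icc (-(1 / 2) : ℝ) (1 / 2)) :=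
    Bornology.IsBounded.pi fun _ => isBounded_Icc _ _
  refine ((PiLp.antilipschitzWith_ofLp 2 _).isBounded_preimage hbox).subset fun x hx => ?_
  exact fun i _ => ⟨(hx i).1.le, (hx i).2.le⟩

theorem global_stein_Hlog_sufficiency_general {θ f φ : En n → ℝ} {L : ℝ≥0}
    (hθint : ∫ x, θ x = 1) (hθenergy : logLogEnergy volume θ < ⊤) (hf : Integrable f)
    (hfenergy : logLogEnergy volume f < ⊤) (hφ : LipschitzWith L φ)
    (hφsupp : Function.support φ ⊆ closedBall 0 1) :
    ∫⁻ x, ENNReal.ofReal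
      (Psi n x (Mphi n φ (fun y => f y - (∫ z, f z) * θ y) x)) < ⊤ := by
  have hθ : Integrable fun y => (∫ z, f z) * θ y :=
    (Integrable.of_integral_ne_zero (by simp [hθint])).const_mul _
  refine lintegral_Psi_Mphi_lt_top_of_integral_eq_zero hφ hφsupp (hf.sub hθ) ?_
    (logLogEnergy_sub_const_mul_lt_top hf.aemeasurable hfenergy hθenergy _)
  rw [integral_sub hf hθ, integral_const_mul, hθint, mul_one, sub_self]

end Psi

/-- **Sufficiency in the global Stein theorem for `H_log`.**
If `f` is integrable and `∫ |f| (1 + ln₊ ln(e+|f|) + ln₊ ln(e+|x|)) dx < ∞`, then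
`T_θ f = f - (∫ f) θ` belongs to `H_log(ℝ^n)`. -/
theorem global_stein_Hlog_sufficiency (n : ℕ) (hn : 1 ≤ n) (θ f : En n → ℝ)
    (hθmeas : Measurable θ) (hθbdd : ∃ C, ∀ x, |θ x| ≤ C)
    (hθsupp : ∀ x, x ∉ unitQ n → θ x = 0) (hθint : (∫ x, θ x) = 1)
    (hf : Integrable f)
    (hcond : ∫⁻ x, ENNReal.ofReal (|f x| *
        (1 + lnp (Real.log (Real.exp 1 + |f x|)) +
          lnp (Real.log (Real.exp 1 + ‖x‖)))) < ⊤) :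
    ∀ φ : En n → ℝ, IsTestFun n φ →
      ∫⁻ x, ENNReal.ofReal
        (Psi n x (Mphi n φ (fun y => f y - (∫ z, f z) * θ y) x)) < ⊤ := by
  intro φ hφ
  obtain ⟨C, hC⟩ := hθbdd
  obtain ⟨L, hL⟩ := hφ.exists_lipschitzWith_s17
  exact global_stein_Hlog_sufficiency_general hθint
    (logLogEnergy_lt_top_of_bounded isBounded_unitQ hθsupp hC) hf hcond hL hφ.support_subset_s17
end
end
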